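/- The topology induced by SCW̄_p on 𝒫_p(𝒳_1 × 𝒫_p(𝒳_2)) is equal to the topology induced by AW̄_p on that space. -/

import Mathlib

open MeasureTheory ProbabilityTheory ENNReal Filter Topology

noncomputable section

namespace AWPaper

/-! ### Generic constructions -/

variable {α β : Type*}

/-- The set of couplings of two measures. -/
def Cpl [MeasurableSpace α] [MeasurableSpace β] (μ : Measure α) (ν : Measure β) :
    Set (Measure (α × β)) :=
  {π | π.map Prod.fst = μ ∧ π.map Prod.snd = ν}

/-- The `p`-Wasserstein distance (with values in `ℝ≥0∞`) associated to an
`ℝ≥0∞`-valued distance function `d`. -/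
def Wp [MeasurableSpace α] (p : ℝ) (d : α → α → ℝ≥0∞) (μ ν : Measure α) : ℝ≥0∞ :=
  ⨅ π ∈ Cpl μ ν, (∫⁻ z, d z.1 z.2 ^ p ∂π) ^ (1 / p)

/-- The topology generated by the open balls of an `ℝ≥0∞`-valued distance
function.  For a genuine metric this is the metric topology. -/
def ballTop (d : α → α → ℝ≥0∞) : TopologicalSpace α :=
  TopologicalSpace.generateFrom {s | ∃ x ε, 0 < ε ∧ s = {y | d x y < ε}}

/-- The product distance of two `ℝ≥0∞`-valued distances, `ℓ^p`-style. -/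
def prodDist (p : ℝ) (d₁ : α → α → ℝ≥0∞) (d₂ : β → β → ℝ≥0∞) :
    α × β → α × β → ℝ≥0∞ :=
  fun u v => (d₁ u.1 v.1 ^ p + d₂ u.2 v.2 ^ p) ^ (1 / p)

/-- Membership in the `p`-Wasserstein space: a probability measure with finite
`p`-th moment (w.r.t. the distance function `d`). -/
def MemPp [MeasurableSpace α] (p : ℝ) (d : α → α → ℝ≥0∞) (μ : Measure α) : Prop :=
  IsProbabilityMeasure μ ∧ ∃ x₀, ∫⁻ x, d x₀ x ^ p ∂μ ≠ ∞

/-- The weak topology on measures induced by integration of bounded continuous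
functions, for a given topology `τ` on the base space. -/
def weakTop [MeasurableSpace α] (τ : TopologicalSpace α) : TopologicalSpace (Measure α) :=
  TopologicalSpace.induced
    (fun μ => fun f : @BoundedContinuousFunction α ℝ τ _ => ∫ x, f x ∂μ)
    Pi.topologicalSpace

/-- The product topology built from two explicitly given topologies. -/
def prodTop (τ₁ : TopologicalSpace α) (τ₂ : TopologicalSpace β) : TopologicalSpace (α × β) :=
  TopologicalSpace.induced Prod.fst τ₁ ⊓ TopologicalSpace.induced Prod.snd τ₂

/-- An everywhere-defined version of the disintegration kernel: it agrees with
`Measure.condKernel` on finite measures. -/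
def condK [MeasurableSpace α] [MeasurableSpace β] [StandardBorelSpace β] [Nonempty β]
    (ρ : Measure (α × β)) : Kernel α β :=
  letI := Classical.dec (IsFiniteMeasure ρ)
  if h : IsFiniteMeasure ρ then @Measure.condKernel α β _ _ _ _ ρ h else 0

/-- The disintegration map `𝒫(A × B) → 𝒫(A × 𝒫(B))`. -/
def disint [MeasurableSpace α] [MeasurableSpace β] [StandardBorelSpace β] [Nonempty β]
    (μ : Measure (α × β)) : Measure (α × Measure β) :=
  μ.map (fun z => (z.1, condK μ z.1))

/-- The intensity ("und") map `𝒫(A × 𝒫(B)) → 𝒫(A × B)`. -/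
def und [MeasurableSpace α] [MeasurableSpace β] (μ : Measure (α × Measure β)) :
    Measure (α × β) :=
  μ.bind (fun z => (Measure.dirac z.1).prod z.2)

/-! ### Path spaces -/

variable {X : Type*} [MeasurableSpace X]

/-- The path-space distance `ρ̄((x_t),(y_t)) = (∑ ρ(x_t,y_t)^p)^{1/p}`. -/
def pathDist (p : ℝ) (d : X → X → ℝ≥0∞) {N : ℕ} :
    (Fin N → X) → (Fin N → X) → ℝ≥0∞ :=
  fun x y => (∑ t, d (x t) (y t) ^ p) ^ (1 / p)

/-- The first `t` coordinates of a path. -/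
def restr {N : ℕ} (t : ℕ) (h : t ≤ N) (x : Fin N → X) : Fin t → X :=
  fun s => x (Fin.castLE h s)

/-- The last `N - t` coordinates of a path. -/
def tailr {N : ℕ} (t : ℕ) (h : t ≤ N) (x : Fin N → X) : Fin (N - t) → X :=
  fun s => x ⟨t + s.1, by have := s.2; omega⟩

/-- A coupling `π` of two path measures is causal: for every `t` and Borel
`A ⊆ 𝒳^t`, `π((Y_1,…,Y_t) ∈ A | X) = π((Y_1,…,Y_t) ∈ A | X_1,…,X_t)` a.s. -/
def Causal {N : ℕ} (π : Measure ((Fin N → X) × (Fin N → X))) : Prop :=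
  ∀ (t : ℕ) (h : t ≤ N) (A : Set (Fin t → X)), MeasurableSet A →
    (π[fun z => A.indicator (fun _ => (1 : ℝ)) (restr t h z.2) |
        MeasurableSpace.comap Prod.fst inferInstance])
      =ᵐ[π]
    (π[fun z => A.indicator (fun _ => (1 : ℝ)) (restr t h z.2) |
        MeasurableSpace.comap (fun z => restr t h z.1) inferInstance])

/-- Bicausal couplings. -/
def Bicausal {N : ℕ} (π : Measure ((Fin N → X) × (Fin N → X))) : Prop :=
  Causal π ∧ Causal (π.map Prod.swap)

/-- The causal Wasserstein "distance" `CW_p`. -/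
def CW (p : ℝ) (d : X → X → ℝ≥0∞) {N : ℕ} (μ ν : Measure (Fin N → X)) : ℝ≥0∞ :=
  ⨅ π ∈ {π ∈ Cpl μ ν | Causal π}, (∫⁻ z, pathDist p d z.1 z.2 ^ p ∂π) ^ (1 / p)

/-- The symmetrized causal Wasserstein distance `SCW_p`. -/
def SCW (p : ℝ) (d : X → X → ℝ≥0∞) {N : ℕ} (μ ν : Measure (Fin N → X)) : ℝ≥0∞ :=
  max (CW p d μ ν) (CW p d ν μ)

/-- The adapted (nested, bicausal) Wasserstein distance `AW_p`. -/
def AW (p : ℝ) (d : X → X → ℝ≥0∞) {N : ℕ} (μ ν : Measure (Fin N → X)) : ℝ≥0∞ :=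
  ⨅ π ∈ {π ∈ Cpl μ ν | Bicausal π}, (∫⁻ z, pathDist p d z.1 z.2 ^ p ∂π) ^ (1 / p)

/-! ### Nested spaces (Pflug's nested distributions / Vershik's iterated spaces) -/

/-- A measurable space together with an `ℝ≥0∞`-valued distance. -/
structure QMS : Type 1 where
  carrier : Type
  inst : MeasurableSpace carrier
  dist : carrier → carrier → ℝ≥0∞

/-- The nested sequence of spaces: `nest X _ d p 0 = 𝒳` (this is `𝒳_N`), and
`nest X _ d p (k+1) = 𝒳 × 𝒫(nest X _ d p k)` with the nested distance
`D = (ρ^p + 𝒲_p^p)^{1/p}`.  Thus `𝒳_1` (for `N = k+1` time points) is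
`nest X _ d p k`. -/
def nest (X : Type) (mX : MeasurableSpace X) (d : X → X → ℝ≥0∞) (p : ℝ) : ℕ → QMS
  | 0 => ⟨X, mX, d⟩
  | (k + 1) =>
    let Q := nest X mX d p k
    ⟨X × @Measure Q.carrier Q.inst,
      @Prod.instMeasurableSpace _ _ mX (@Measure.instMeasurableSpace _ Q.inst),
      fun a b => (d a.1 b.1 ^ p + (@Wp _ Q.inst p Q.dist a.2 b.2) ^ p) ^ (1 / p)⟩

section NMapSec

variable (Y : Type) [mY : MeasurableSpace Y] [TopologicalSpace Y] [PolishSpace Y]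
  [BorelSpace Y] [Nonempty Y]

/-- The map `𝒩` sending the law of a process with `k+1` time steps to the
corresponding nested distribution, via iterated regular conditional laws. -/
def NMap (d : Y → Y → ℝ≥0∞) (p : ℝ) :
    ∀ k : ℕ, Measure (Fin (k + 1) → Y) →
      @Measure (nest Y mY d p k).carrier (nest Y mY d p k).inst
  | 0, μ =>
    letI : MeasurableSpace (nest Y mY d p 0).carrier := (nest Y mY d p 0).inst
    μ.map (fun x => x 0)
  | (k + 1), μ =>
    letI : MeasurableSpace (nest Y mY d p k).carrier := (nest Y mY d p k).inst
    letI : MeasurableSpace (nest Y mY d p (k + 1)).carrier := (nest Y mY d p (k + 1)).inst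
    (μ.map (fun x => x 0)).map
      (fun x₀ => (x₀, NMap d p k
        ((condK (μ.map (fun x => (x 0, fun s : Fin (k + 1) => x s.succ)))) x₀)))

end NMapSec

section PathStructures

variable {Y : Type*} [mY : MeasurableSpace Y]

/-- A process `L` is adapted: `L t` depends only on the first `t+1` coordinates. -/
def AdaptedProc {N : ℕ} (L : Fin N → (Fin N → Y) → ℝ) : Prop :=
  ∀ (t : Fin N) (x y : Fin N → Y), (∀ s : Fin N, s ≤ t → x s = y s) → L t x = L t y

/-- `τ` is a stopping time of the canonical filtration on the path space. -/
def IsStopTime {N : ℕ} (τ : (Fin N → Y) → Fin N) : Prop :=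
  ∀ t : Fin N,
    MeasurableSet[MeasurableSpace.comap (restr (X := Y) (t.1 + 1) t.2) inferInstance]
      {x | τ x = t}

/-- The optimal stopping value `v^L(μ)`. -/
def stopVal {N : ℕ} (L : Fin N → (Fin N → Y) → ℝ) (μ : Measure (Fin N → Y)) : ℝ :=
  ⨅ τ : {τ : (Fin N → Y) → Fin N // IsStopTime τ}, ∫ x, L (τ.1 x) x ∂μ

variable [TopologicalSpace Y]

/-- `AC(X̄)`: adapted processes which are continuous and bounded. -/
def ACbdd {N : ℕ} (L : Fin N → (Fin N → Y) → ℝ) : Prop :=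
  (∀ t, Continuous (L t)) ∧ AdaptedProc L ∧ ∃ C : ℝ, ∀ t x, |L t x| ≤ C

/-- `AC_p(X̄)`: adapted continuous processes of growth of order `p`. -/
def ACp (p : ℝ) (d : Y → Y → ℝ≥0∞) {N : ℕ} (L : Fin N → (Fin N → Y) → ℝ) : Prop :=
  (∀ t, Continuous (L t)) ∧ AdaptedProc L ∧
    ∃ (C : ℝ) (x₀ : Fin N → Y), ∀ t x, |L t x| ≤ C * (1 + ((pathDist p d x₀ x) ^ p).toReal)

/-- The optimal stopping topology (weak version, bounded continuous rewards). -/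
def stopTopW (N : ℕ) : TopologicalSpace (Measure (Fin N → Y)) :=
  ⨅ L : {L : Fin N → (Fin N → Y) → ℝ // ACbdd L},
    TopologicalSpace.induced (stopVal L.1) inferInstance

/-- The `𝒲_p`-optimal stopping topology. -/
def stopTopWp (p : ℝ) (d : Y → Y → ℝ≥0∞) (N : ℕ) :
    TopologicalSpace (Measure (Fin N → Y)) :=
  ⨅ L : {L : Fin N → (Fin N → Y) → ℝ // ACp p d L},
    TopologicalSpace.induced (stopVal L.1) inferInstance

variable [PolishSpace Y] [BorelSpace Y] [Nonempty Y]

/-- Hellwig's map `I_t`, sending `μ` to the joint law of the first `t`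
coordinates together with the conditional law of the remaining coordinates. -/
def infoMap (N t : ℕ) (h : t ≤ N) (μ : Measure (Fin N → Y)) :
    Measure ((Fin t → Y) × Measure (Fin (N - t) → Y)) :=
  μ.map (fun x => (restr t h x,
    condK (μ.map (fun y => (restr t h y, tailr t h y))) (restr t h x)))

/-- Hellwig's information topology (weak version). -/
def infoTopW (N : ℕ) : TopologicalSpace (Measure (Fin N → Y)) :=
  ⨅ (t : ℕ) (_ : 1 ≤ t) (h : t ≤ N - 1),
    TopologicalSpace.induced (infoMap N t (le_trans h (Nat.sub_le N 1)))
      (weakTop (prodTop Pi.topologicalSpace (weakTop Pi.topologicalSpace)))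

/-- The `𝒲_p`-information topology. -/
def infoTopWp (p : ℝ) (d : Y → Y → ℝ≥0∞) (N : ℕ) :
    TopologicalSpace (Measure (Fin N → Y)) :=
  ⨅ (t : ℕ) (_ : 1 ≤ t) (h : t ≤ N - 1),
    TopologicalSpace.induced (infoMap N t (le_trans h (Nat.sub_le N 1)))
      (ballTop (Wp p (prodDist p (pathDist p d) (Wp p (pathDist p d)))))

/-- Aldous' prediction process `Z_t^μ` (as a function of the path). -/
def predict (N : ℕ) (μ : Measure (Fin N → Y)) (t : ℕ) (h : t ≤ N) :
    (Fin N → Y) → Measure (Fin N → Y) :=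
  fun x => condK (μ.map (fun y => (restr t h y, y))) (restr t h x)

/-- Aldous' map `E`, sending `μ` to the joint law of the path together with its
prediction process. -/
def aldousMap (N : ℕ) (μ : Measure (Fin N → Y)) :
    Measure ((Fin N → Y) × (Fin (N + 1) → Measure (Fin N → Y))) :=
  μ.map (fun x =>
    (x, fun t : Fin (N + 1) => predict N μ t.1 (Nat.lt_succ_iff.mp t.2) x))

/-- Aldous' extended weak topology. -/
def aldousTopW (N : ℕ) : TopologicalSpace (Measure (Fin N → Y)) :=
  TopologicalSpace.induced (aldousMap N)
    (weakTop (prodTop Pi.topologicalSpace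
      (@Pi.topologicalSpace (Fin (N + 1)) (fun _ => Measure (Fin N → Y))
        (fun _ => weakTop Pi.topologicalSpace))))

/-- The extended `𝒲_p`-topology. -/
def aldousTopWp (p : ℝ) (d : Y → Y → ℝ≥0∞) (N : ℕ) :
    TopologicalSpace (Measure (Fin N → Y)) :=
  TopologicalSpace.induced (aldousMap N)
    (ballTop (Wp p (prodDist p (pathDist p d)
      (fun Z Z' : Fin (N + 1) → Measure (Fin N → Y) =>
        (∑ t, Wp p (pathDist p d) (Z t) (Z' t) ^ p) ^ (1 / p)))))

end PathStructures

/-! ### The lifted two-time-point space `𝒳₁ × 𝒫_p(𝒳₂)` -/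

section Lifted

variable {A B : Type*} [MeasurableSpace A] [MeasurableSpace B]

/-- The nested distance on `𝒳₁ × 𝒫_p(𝒳₂)`. -/
def liftDist (p : ℝ) (dA : A → A → ℝ≥0∞) (dB : B → B → ℝ≥0∞) :
    (A × Measure B) → (A × Measure B) → ℝ≥0∞ :=
  fun u v => (dA u.1 v.1 ^ p + Wp p dB u.2 v.2 ^ p) ^ (1 / p)

/-- `η` is a version of the measure-valued conditional expectation
`E_γ[X̂₂ | Y⃗]` (i.e. the barycenter of a regular conditional law of `X̂₂`
given `Y⃗ = (Y₁, Ŷ₂)`). -/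
def IsCondBar (γ : Measure ((A × Measure B) × (A × Measure B)))
    (η : (A × Measure B) × (A × Measure B) → Measure B) : Prop :=
  (∃ g : (A × Measure B) → Measure B, Measurable g ∧ ∀ z, η z = g z.2) ∧
  (∀ z, IsProbabilityMeasure (η z)) ∧
  ∀ S : Set (A × Measure B), MeasurableSet S → ∀ E : Set B, MeasurableSet E →
    ∫⁻ z in {z | z.2 ∈ S}, η z E ∂γ = ∫⁻ z in {z | z.2 ∈ S}, z.1.2 E ∂γ

/-- `AW̄_p`, the `p`-Wasserstein distance on `𝒫_p(𝒳₁ × 𝒫_p(𝒳₂))`. -/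
def AWbar (p : ℝ) (dA : A → A → ℝ≥0∞) (dB : B → B → ℝ≥0∞)
    (μ ν : Measure (A × Measure B)) : ℝ≥0∞ :=
  Wp p (liftDist p dA dB) μ ν

/-- `CW̄_p`, the lifted causal Wasserstein "distance". -/
def CWbar (p : ℝ) (dA : A → A → ℝ≥0∞) (dB : B → B → ℝ≥0∞)
    (μ ν : Measure (A × Measure B)) : ℝ≥0∞ :=
  ⨅ γ ∈ Cpl μ ν, ⨅ η ∈ {η | IsCondBar γ η},
    (∫⁻ z, (dA z.1.1 z.2.1 ^ p + Wp p dB (η z) z.2.2 ^ p) ∂γ) ^ (1 / p)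

/-- `SCW̄_p`, the symmetrization of `CW̄_p`. -/
def SCWbar (p : ℝ) (dA : A → A → ℝ≥0∞) (dB : B → B → ℝ≥0∞)
    (μ ν : Measure (A × Measure B)) : ℝ≥0∞ :=
  max (CWbar p dA dB μ ν) (CWbar p dA dB ν μ)

/-- Membership in `𝒫_p(𝒳₁ × 𝒫_p(𝒳₂))`: a probability measure, concentrated on
`𝒳₁ × 𝒫_p(𝒳₂)`, with finite `p`-th moment for the nested distance. -/
def MemPpLift (p : ℝ) (dA : A → A → ℝ≥0∞) (dB : B → B → ℝ≥0∞)
    (μ : Measure (A × Measure B)) : Prop :=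
  IsProbabilityMeasure μ ∧ (∀ᵐ z ∂μ, MemPp p dB z.2) ∧
    ∃ z₀ : A × Measure B, MemPp p dB z₀.2 ∧ ∫⁻ z, liftDist p dA dB z₀ z ^ p ∂μ ≠ ∞

/-- Two-time-point causality: given a coupling `π` of measures on products
`A₁ × B₁` and `A₂ × B₂`, the conditional law of `Y₁` given `X = (X₁, X₂)`
coincides with the conditional law of `Y₁` given `X₁`. -/
def Causal2 {A₁ B₁ A₂ B₂ : Type*} [MeasurableSpace A₁] [MeasurableSpace B₁]
    [MeasurableSpace A₂] [MeasurableSpace B₂]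
    (π : Measure ((A₁ × B₁) × (A₂ × B₂))) : Prop :=
  ∀ S : Set A₂, MeasurableSet S →
    (π[fun z => S.indicator (fun _ => (1 : ℝ)) z.2.1 |
        MeasurableSpace.comap Prod.fst inferInstance])
      =ᵐ[π]
    (π[fun z => S.indicator (fun _ => (1 : ℝ)) z.2.1 |
        MeasurableSpace.comap (fun z => z.1.1) inferInstance])

/-- The two-time-point causal Wasserstein "distance" on `𝒫_p(𝒳₁ × 𝒳₂)`. -/
def CW2 (p : ℝ) (dA : A → A → ℝ≥0∞) (dB : B → B → ℝ≥0∞)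
    (μ ν : Measure (A × B)) : ℝ≥0∞ :=
  ⨅ π ∈ {π ∈ Cpl μ ν | Causal2 π},
    (∫⁻ z, (dA z.1.1 z.2.1 ^ p + dB z.1.2 z.2.2 ^ p) ∂π) ^ (1 / p)

end Lifted

set_option linter.unusedSectionVars false
set_option linter.unusedVariables false
set_option linter.unusedSimpArgs false

/-! ### Norms -/

/-- `L^p(ℓ^p)` norm of a pair. -/
def nrm2 {Ω : Type*} [MeasurableSpace Ω] (p : ℝ) (P : Measure Ω) (f g : Ω → ℝ≥0∞) : ℝ≥0∞ :=
  (∫⁻ z, (f z ^ p + g z ^ p) ∂P) ^ (1 / p)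

section Norms
variable {Ω : Type*} [MeasurableSpace Ω] {p : ℝ} {P : Measure Ω}

theorem rpow_p_inv (hp : 1 ≤ p) (a : ℝ≥0∞) : (a ^ (1 / p)) ^ p = a := by
  rw [← ENNReal.rpow_mul, one_div, inv_mul_cancel₀ (by linarith), ENNReal.rpow_one]

theorem rpow_inv_p (hp : 1 ≤ p) (a : ℝ≥0∞) : (a ^ p) ^ (1 / p) = a := by
  rw [← ENNReal.rpow_mul, one_div, mul_inv_cancel₀ (by linarith), ENNReal.rpow_one]

theorem nrm2_rpow (hp : 1 ≤ p) (f g : Ω → ℝ≥0∞) :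
    nrm2 p P f g ^ p = ∫⁻ z, (f z ^ p + g z ^ p) ∂P := rpow_p_inv hp _

theorem nrm2_mono (hp : 1 ≤ p) {f g f' g' : Ω → ℝ≥0∞} (hf : ∀ᵐ z ∂P, f z ≤ f' z)
    (hg : ∀ᵐ z ∂P, g z ≤ g' z) : nrm2 p P f g ≤ nrm2 p P f' g' := by
  refine ENNReal.rpow_le_rpow (lintegral_mono_ae ?_) (by positivity)
  filter_upwards [hf, hg] with z h1 h2
  gcongr

theorem nrm2_congr {f g f' g' : Ω → ℝ≥0∞} (hf : ∀ᵐ z ∂P, f z = f' z)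
    (hg : ∀ᵐ z ∂P, g z = g' z) : nrm2 p P f g = nrm2 p P f' g' := by
  unfold nrm2
  congr 1
  refine lintegral_congr_ae ?_
  filter_upwards [hf, hg] with z h1 h2
  rw [h1, h2]

theorem pair_add_le (hp : 1 ≤ p) (a b c d : ℝ≥0∞) :
    ((a + b) ^ p + (c + d) ^ p) ^ (1 / p) ≤ (a ^ p + c ^ p) ^ (1 / p) + (b ^ p + d ^ p) ^ (1 / p) := by
  have := ENNReal.Lp_add_le (Finset.univ : Finset (Fin 2)) ![a, c] ![b, d] hp
  simpa [Fin.sum_univ_two] using this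

theorem nrm2_add_le (hp : 1 ≤ p) {f g f' g' : Ω → ℝ≥0∞} (hf : AEMeasurable f P)
    (hg : AEMeasurable g P) (hf' : AEMeasurable f' P) (hg' : AEMeasurable g' P) :
    nrm2 p P (fun z => f z + f' z) (fun z => g z + g' z) ≤ nrm2 p P f g + nrm2 p P f' g' := by
  have h1 : AEMeasurable (fun z => (f z ^ p + g z ^ p) ^ (1 / p)) P :=
    ((hf.pow_const _).add (hg.pow_const _)).pow_const _
  have h2 : AEMeasurable (fun z => (f' z ^ p + g' z ^ p) ^ (1 / p)) P :=
    ((hf'.pow_const _).add (hg'.pow_const _)).pow_const _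
  have := ENNReal.lintegral_Lp_add_le h1 h2 hp
  simp only [Pi.add_apply, rpow_p_inv hp] at this
  refine le_trans (ENNReal.rpow_le_rpow (lintegral_mono fun z => ?_) (by positivity)) this
  have h := ENNReal.rpow_le_rpow (pair_add_le hp (f z) (f' z) (g z) (g' z)) (by linarith : 0 ≤ p)
  rwa [rpow_p_inv hp] at h

theorem nrm2_const_le (hp : 1 ≤ p) [IsProbabilityMeasure P] (a b : ℝ≥0∞) :
    nrm2 p P (fun _ => a) (fun _ => b) ≤ a + b := by
  unfold nrm2
  simp only [lintegral_const, measure_univ, mul_one]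
  calc _ ≤ ((a + b) ^ p) ^ (1 / p) := by
        refine ENNReal.rpow_le_rpow (ENNReal.add_rpow_le_rpow_add a b hp) (by positivity)
    _ = _ := rpow_inv_p hp _

theorem nrm2_zero_left (hp : 1 ≤ p) (g : Ω → ℝ≥0∞) :
    nrm2 p P (fun _ => 0) g = (∫⁻ z, g z ^ p ∂P) ^ (1 / p) := by
  unfold nrm2
  simp [ENNReal.zero_rpow_of_pos (by linarith : 0 < p)]

theorem nrm2_zero_right (hp : 1 ≤ p) (g : Ω → ℝ≥0∞) :
    nrm2 p P g (fun _ => 0) = (∫⁻ z, g z ^ p ∂P) ^ (1 / p) := by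
  unfold nrm2
  simp [ENNReal.zero_rpow_of_pos (by linarith : 0 < p)]

theorem nrm2_map {Ω' : Type*} [MeasurableSpace Ω'] {Q : Measure Ω'} {T : Ω' → Ω} (hT : Measurable T)
    {f g : Ω → ℝ≥0∞} (hf : AEMeasurable f (Q.map T)) (hg : AEMeasurable g (Q.map T)) :
    nrm2 p (Q.map T) f g = nrm2 p Q (fun z => f (T z)) (fun z => g (T z)) := by
  unfold nrm2
  have h : AEMeasurable (fun z => f z ^ p + g z ^ p) (Q.map T) :=
    (hf.pow_const _).add (hg.pow_const _)
  rw [lintegral_map' h hT.aemeasurable]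
end Norms

/-! ### Gluing along a countable index -/

section Glue
variable {Ω₁ Ω₂ : Type*} [MeasurableSpace Ω₁] [MeasurableSpace Ω₂]

/-- the conditional kernel -/
def cK (Q : Measure Ω₂) (i : Ω₁ → ℕ) (hi : Measurable i) (j : Ω₂ → ℕ) : Kernel Ω₁ Ω₂ :=
  ⟨fun ω => Q[|j ⁻¹' {i ω}], (measurable_from_top (f := fun k : ℕ => Q[|j ⁻¹' {k}])).comp hi⟩

theorem cK_apply (Q : Measure Ω₂) (i : Ω₁ → ℕ) (hi : Measurable i) (j : Ω₂ → ℕ) (ω : Ω₁) :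
    cK Q i hi j ω = Q[|j ⁻¹' {i ω}] := rfl

instance (Q : Measure Ω₂) [IsFiniteMeasure Q] (i : Ω₁ → ℕ) (hi : Measurable i) (j : Ω₂ → ℕ) :
    IsFiniteKernel (cK Q i hi j) := by
  refine ⟨1, ENNReal.one_lt_top, fun ω => ?_⟩
  rw [cK_apply]
  by_cases h : Q (j ⁻¹' {i ω}) = 0
  · simp [ProbabilityTheory.cond_eq_zero_of_meas_eq_zero h]
  · have := ProbabilityTheory.cond_isProbabilityMeasure h
    simp

/-- gluing of two probability measures along countable labels -/
def glue (P : Measure Ω₁) (Q : Measure Ω₂) (i : Ω₁ → ℕ) (hi : Measurable i) (j : Ω₂ → ℕ) :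
    Measure (Ω₁ × Ω₂) := P ⊗ₘ (cK Q i hi j)

variable {P : Measure Ω₁} {Q : Measure Ω₂} [IsProbabilityMeasure P] [IsProbabilityMeasure Q]
  {i : Ω₁ → ℕ} {j : Ω₂ → ℕ} 

theorem ae_label_pos (hi : Measurable i) : ∀ᵐ ω ∂P, P (i ⁻¹' {i ω}) ≠ 0 := by
  have : {ω | ¬ P (i ⁻¹' {i ω}) ≠ 0} = ⋃ k ∈ {k : ℕ | P (i ⁻¹' {k}) = 0}, i ⁻¹' {k} := by
    ext ω; simp
  rw [ae_iff, this, measure_biUnion_null_iff (Set.to_countable _)]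
  simp

theorem label_eq (hi : Measurable i) (hj : Measurable j) (h : P.map i = Q.map j) (k : ℕ) :
    P (i ⁻¹' {k}) = Q (j ⁻¹' {k}) := by
  rw [← Measure.map_apply hi (by measurability), h, Measure.map_apply hj (by measurability)]

theorem glue_fst (hi : Measurable i) (hj : Measurable j) (h : P.map i = Q.map j) :
    (glue P Q i hi j).map Prod.fst = P := by
  ext s hs
  rw [Measure.map_apply measurable_fst hs, glue, Measure.compProd_apply (measurable_fst hs),
    ← lintegral_indicator_one hs]
  refine lintegral_congr_ae ?_
  filter_upwards [ae_label_pos (P := P) hi] with ω hω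
  rw [label_eq hi hj h] at hω
  have := ProbabilityTheory.cond_isProbabilityMeasure hω
  by_cases hs : ω ∈ s
  · simp [hs, cK_apply, Set.preimage_preimage]
  · simp [hs, Set.preimage_preimage]

theorem sum_label (hj : Measurable j) (F : Ω₂ → ℝ≥0∞) :
    ∫⁻ ω, F ω ∂Q = ∑' k, ∫⁻ ω in j ⁻¹' {k}, F ω ∂Q := by
  rw [← lintegral_iUnion (fun k => hj (by measurability))
    (by intro a b hab; exact Set.disjoint_left.2 (by simp; grind))]
  have : (⋃ k, j ⁻¹' {k}) = Set.univ := by ext; simp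
  rw [this, Measure.restrict_univ]

theorem lintegral_cond (hj : Measurable j) (k : ℕ) (F : Ω₂ → ℝ≥0∞) :
    Q (j ⁻¹' {k}) * ∫⁻ ω, F ω ∂Q[|j ⁻¹' {k}] = ∫⁻ ω in j ⁻¹' {k}, F ω ∂Q := by
  by_cases h : Q (j ⁻¹' {k}) = 0
  · rw [h, zero_mul, Measure.restrict_eq_zero.2 h]; simp
  · rw [ProbabilityTheory.cond, lintegral_smul_measure, smul_eq_mul, ← mul_assoc,
      ENNReal.mul_inv_cancel h (measure_ne_top _ _), one_mul]

/-- integrate first over the conditional law given the label -/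
theorem lintegral_lintegral_cond (hi : Measurable i) (hj : Measurable j) (h : P.map i = Q.map j)
    (F : Ω₂ → ℝ≥0∞) :
    ∫⁻ ω, ∫⁻ ω', F ω' ∂Q[|j ⁻¹' {i ω}] ∂P = ∫⁻ ω, F ω ∂Q := by
  rw [sum_label (Q := Q) hj, sum_label (Q := P) hi]
  congr 1
  ext k
  rw [← lintegral_cond hj k, ← label_eq hi hj h k]
  rw [setLIntegral_congr_fun (g := fun _ => ∫⁻ ω', F ω' ∂Q[|j ⁻¹' {k}]) (hi (by measurability))]
  · rw [setLIntegral_const, mul_comm]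
  · intro ω hω
    have : i ω = k := hω
    simp [this]

theorem lintegral_glue (hi : Measurable i) {F : Ω₁ × Ω₂ → ℝ≥0∞} (hF : Measurable F) :
    ∫⁻ z, F z ∂(glue P Q i hi j) = ∫⁻ ω, ∫⁻ ω', F (ω, ω') ∂Q[|j ⁻¹' {i ω}] ∂P := by
  rw [glue, Measure.lintegral_compProd hF]
  rfl

theorem glue_snd (hi : Measurable i) (hj : Measurable j) (h : P.map i = Q.map j) :
    (glue P Q i hi j).map Prod.snd = Q := by
  ext s hs
  rw [Measure.map_apply measurable_snd hs, ← lintegral_indicator_one hs,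
    ← lintegral_lintegral_cond hi hj h, ← lintegral_indicator_one (measurable_snd hs),
    lintegral_glue hi (measurable_one.indicator (measurable_snd hs))]
  rfl

theorem glue_prob (hi : Measurable i) (hj : Measurable j) (h : P.map i = Q.map j) :
    IsProbabilityMeasure (glue P Q i hi j) := by
  constructor
  have := congrArg (fun m => m Set.univ) (glue_fst hi hj h)
  simpa [Measure.map_apply measurable_fst MeasurableSet.univ] using this

theorem glue_label (hi : Measurable i) (hj : Measurable j) :
    ∀ᵐ z ∂(glue P Q i hi j), i z.1 = j z.2 := by
  have hm : MeasurableSet {z : Ω₁ × Ω₂ | ¬ i z.1 = j z.2} :=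
    (measurableSet_eq_fun (hi.comp measurable_fst) (hj.comp measurable_snd)).compl
  rw [ae_iff, glue, Measure.compProd_apply hm]
  refine (lintegral_congr fun ω => ?_).trans lintegral_zero
  rw [cK_apply]
  have := ProbabilityTheory.cond_apply (μ := Q) (s := j ⁻¹' {i ω}) (hj (by measurability))
    (Prod.mk ω ⁻¹' {z : Ω₁ × Ω₂ | ¬ i z.1 = j z.2})
  have h0 : j ⁻¹' {i ω} ∩ (Prod.mk ω ⁻¹' {z : Ω₁ × Ω₂ | ¬ i z.1 = j z.2}) = ∅ := by
    ext x; simp; grind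
  rw [this, h0]; simp

end Glue

/-! ### Couplings -/
section Couplings
variable {Z : Type*} [MeasurableSpace Z] {a b c : Measure Z} {p : ℝ}

theorem Cpl_prob {Z' : Type*} [MeasurableSpace Z'] {b : Measure Z'} [IsProbabilityMeasure a]
    {γ : Measure (Z × Z')} (h : γ ∈ Cpl a b) : IsProbabilityMeasure γ := by
  constructor
  have := congrArg (fun m => m Set.univ) h.1
  simpa [Measure.map_apply measurable_fst MeasurableSet.univ] using this

theorem Cpl_ae_fst {Z' : Type*} [MeasurableSpace Z'] {b : Measure Z'}
    {γ : Measure (Z × Z')} (h : γ ∈ Cpl a b) {q : Z → Prop} (hq : ∀ᵐ x ∂a, q x) :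
    ∀ᵐ z ∂γ, q z.1 := by
  rw [← h.1] at hq
  exact ae_of_ae_map measurable_fst.aemeasurable hq

theorem Cpl_ae_snd {Z' : Type*} [MeasurableSpace Z'] {b : Measure Z'}
    {γ : Measure (Z × Z')} (h : γ ∈ Cpl a b) {q : Z' → Prop} (hq : ∀ᵐ x ∂b, q x) :
    ∀ᵐ z ∂γ, q z.2 := by
  rw [← h.2] at hq
  exact ae_of_ae_map measurable_snd.aemeasurable hq

/-- `d` agrees on `G` with a measurable function. -/
def MeasOn (G : Set Z) (d : Z → Z → ℝ≥0∞) : Prop :=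
  ∃ d' : Z × Z → ℝ≥0∞, Measurable d' ∧ ∀ x ∈ G, ∀ y ∈ G, d x y = d' (x, y)

theorem MeasOn.aemeasurable {Ω : Type*} [MeasurableSpace Ω] {P : Measure Ω} {G : Set Z}
    {d : Z → Z → ℝ≥0∞} (h : MeasOn G d) {U V : Ω → Z} (hU : AEMeasurable U P)
    (hV : AEMeasurable V P)
    (hUG : ∀ᵐ ω ∂P, U ω ∈ G) (hVG : ∀ᵐ ω ∂P, V ω ∈ G) :
    AEMeasurable (fun ω => d (U ω) (V ω)) P := by
  obtain ⟨d', hd', h⟩ := h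
  refine (hd'.comp_aemeasurable (hU.prodMk hV)).congr ?_
  filter_upwards [hUG, hVG] with ω h1 h2
  simp [h _ h1 _ h2]

theorem Wp_triangle_gen (hp : 1 ≤ p) (d : Z → Z → ℝ≥0∞) (G : Set Z) 
    [IsProbabilityMeasure a] [IsProbabilityMeasure b] [IsProbabilityMeasure c]
    (ha : ∀ᵐ x ∂a, x ∈ G) (hb : ∀ᵐ x ∂b, x ∈ G) (hc : ∀ᵐ x ∂c, x ∈ G)
    (hd : MeasOn G d) (htri : ∀ x ∈ G, ∀ y ∈ G, ∀ z ∈ G, d x z ≤ d x y + d y z)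
    (hcell : ∀ ε : ℝ≥0∞, 0 < ε → ε ≠ ∞ →
      ∃ i : Z → ℕ, Measurable i ∧ ∀ x ∈ G, ∀ y ∈ G, i x = i y → d x y ≤ ε) :
    Wp p d a c ≤ Wp p d a b + Wp p d b c := by
  have key : ∀ γ ∈ Cpl a b, ∀ θ ∈ Cpl b c, Wp p d a c ≤
      (∫⁻ z, d z.1 z.2 ^ p ∂γ) ^ (1 / p) + (∫⁻ z, d z.1 z.2 ^ p ∂θ) ^ (1 / p) := by
    intro γ hγ θ hθ
    refine ENNReal.le_of_forall_pos_le_add ?_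
    intro ε hε _
    obtain ⟨i, hi, hcell⟩ := hcell ε (by simpa using hε) (by simp)
    have := Cpl_prob hγ
    have := Cpl_prob hθ
    have hi1 : Measurable (fun z : Z × Z => i z.2) := hi.comp measurable_snd
    have hj1 : Measurable (fun z : Z × Z => i z.1) := hi.comp measurable_fst
    have hlab : γ.map (fun z : Z × Z => i z.2) = θ.map (fun z : Z × Z => i z.1) := by
      rw [show (fun z : Z × Z => i z.2) = i ∘ Prod.snd from rfl,
        show (fun z : Z × Z => i z.1) = i ∘ Prod.fst from rfl,
        ← Measure.map_map hi measurable_snd, ← Measure.map_map hi measurable_fst, hγ.2, hθ.1]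
    set π := glue γ θ _ hi1 (fun z : Z × Z => i z.1) with hπ
    have hπ1 : π.map Prod.fst = γ := glue_fst hi1 hj1 hlab
    have hπ2 : π.map Prod.snd = θ := glue_snd hi1 hj1 hlab
    have hπp : IsProbabilityMeasure π := glue_prob hi1 hj1 hlab
    have hπC : π ∈ Cpl γ θ := ⟨hπ1, hπ2⟩
    have hl : ∀ᵐ z ∂π, i z.1.2 = i z.2.1 := glue_label hi1 hj1
    have m11 : Measurable (fun z : (Z × Z) × (Z × Z) => z.1.1) := by fun_prop
    have m12 : Measurable (fun z : (Z × Z) × (Z × Z) => z.1.2) := by fun_prop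
    have m21 : Measurable (fun z : (Z × Z) × (Z × Z) => z.2.1) := by fun_prop
    have m22 : Measurable (fun z : (Z × Z) × (Z × Z) => z.2.2) := by fun_prop
    have g11 : ∀ᵐ z ∂π, z.1.1 ∈ G := Cpl_ae_fst hπC (Cpl_ae_fst hγ ha)
    have g12 : ∀ᵐ z ∂π, z.1.2 ∈ G := Cpl_ae_fst hπC (Cpl_ae_snd hγ hb)
    have g21 : ∀ᵐ z ∂π, z.2.1 ∈ G := Cpl_ae_snd hπC (Cpl_ae_fst hθ hb)
    have g22 : ∀ᵐ z ∂π, z.2.2 ∈ G := Cpl_ae_snd hπC (Cpl_ae_snd hθ hc)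
    have hC : π.map (fun z => (z.1.1, z.2.2)) ∈ Cpl a c := by
      constructor
      · rw [Measure.map_map measurable_fst (by fun_prop), ← hγ.1, ← hπ1,
          Measure.map_map measurable_fst measurable_fst]; rfl
      · rw [Measure.map_map measurable_snd (by fun_prop), ← hθ.2, ← hπ2,
          Measure.map_map measurable_snd measurable_snd]; rfl
    have hae : AEMeasurable (fun z : Z × Z => d z.1 z.2) (π.map (fun z => (z.1.1, z.2.2))) :=
      hd.aemeasurable measurable_fst.aemeasurable measurable_snd.aemeasurable
        (Cpl_ae_fst hC ha) (Cpl_ae_snd hC hc)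
    have haeγ : AEMeasurable (fun z : Z × Z => d z.1 z.2) γ :=
      hd.aemeasurable measurable_fst.aemeasurable measurable_snd.aemeasurable
        (Cpl_ae_fst hγ ha) (Cpl_ae_snd hγ hb)
    have haeθ : AEMeasurable (fun z : Z × Z => d z.1 z.2) θ :=
      hd.aemeasurable measurable_fst.aemeasurable measurable_snd.aemeasurable
        (Cpl_ae_fst hθ hb) (Cpl_ae_snd hθ hc)
    have a1 : AEMeasurable (fun z : (Z × Z) × (Z × Z) => d z.1.1 z.1.2) π :=
      hd.aemeasurable m11.aemeasurable m12.aemeasurable g11 g12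
    have a2 : AEMeasurable (fun z : (Z × Z) × (Z × Z) => d z.2.1 z.2.2) π :=
      hd.aemeasurable m21.aemeasurable m22.aemeasurable g21 g22
    calc Wp p d a c ≤ (∫⁻ z, d z.1 z.2 ^ p ∂(π.map (fun z => (z.1.1, z.2.2)))) ^ (1 / p) :=
          iInf₂_le _ hC
      _ = nrm2 p π (fun z => d z.1.1 z.2.2) (fun _ => 0) := by
          rw [← nrm2_zero_right hp, nrm2_map (by fun_prop) hae (by fun_prop)]
      _ ≤ nrm2 p π (fun z => d z.1.1 z.1.2 + (d z.2.1 z.2.2 + ε)) (fun _ => 0 + (0 + 0)) := by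
          refine nrm2_mono hp ?_ (by simp)
          filter_upwards [hl, g11, g12, g21, g22] with z h1 h2 h3 h4 h5
          calc _ ≤ d z.1.1 z.1.2 + d z.1.2 z.2.2 := htri _ h2 _ h3 _ h5
            _ ≤ d z.1.1 z.1.2 + (d z.1.2 z.2.1 + d z.2.1 z.2.2) := by
              gcongr; exact htri _ h3 _ h4 _ h5
            _ ≤ _ := by
              rw [add_comm (d z.1.2 z.2.1)]; gcongr; exact hcell _ h3 _ h4 h1
      _ ≤ nrm2 p π (fun z => d z.1.1 z.1.2) (fun _ => 0) +
          (nrm2 p π (fun z => d z.2.1 z.2.2) (fun _ => 0) + (ε + 0)) := by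
          refine (nrm2_add_le hp a1 (by fun_prop) (a2.add (by fun_prop)) (by fun_prop)).trans ?_
          gcongr
          refine (nrm2_add_le hp a2 (by fun_prop) (by fun_prop) (by fun_prop)).trans ?_
          gcongr
          exact nrm2_const_le hp _ _
      _ = _ := by
          rw [← nrm2_zero_right hp, ← nrm2_zero_right hp, add_zero, add_assoc]
          congr 1
          · conv_rhs => rw [← hπ1]
            rw [nrm2_map measurable_fst (by rwa [hπ1]) (by fun_prop)]
          · conv_rhs => rw [← hπ2]
            rw [nrm2_map measurable_snd (by rwa [hπ2]) (by fun_prop)]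
  conv_rhs => unfold Wp
  simp_rw [ENNReal.iInf_add, ENNReal.add_iInf]
  exact le_iInf₂ fun γ hγ => le_iInf₂ fun θ hθ => key γ hγ θ hθ

theorem Wp_le (p : ℝ) (d : Z → Z → ℝ≥0∞) {γ : Measure (Z × Z)} (h : γ ∈ Cpl a b) :
    Wp p d a b ≤ (∫⁻ z, d z.1 z.2 ^ p ∂γ) ^ (1 / p) := iInf₂_le _ h

theorem Wp_symm (p : ℝ) {d : Z → Z → ℝ≥0∞} (hd : ∀ x y, d x y = d y x) (a b : Measure Z) :
    Wp p d a b ≤ Wp p d b a := by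
  refine le_iInf₂ fun γ hγ => ?_
  have hC : γ.map Prod.swap ∈ Cpl a b := by
    constructor
    · rw [Measure.map_map measurable_fst measurable_swap]; exact hγ.2
    · rw [Measure.map_map measurable_snd measurable_swap]; exact hγ.1
  refine (Wp_le p d hC).trans ?_
  · have : (∫⁻ z, d z.1 z.2 ^ p ∂(γ.map Prod.swap)) = (∫⁻ z, d z.1 z.2 ^ p ∂γ) := by
      have h := (MeasurableEquiv.prodComm (α := Z) (β := Z)).measurableEmbedding.lintegral_map
        (μ := γ) (fun z => d z.1 z.2 ^ p)
      refine Eq.trans h ?_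
      exact lintegral_congr fun z => by rw [hd z.1 z.2]; rfl
    rw [this]

theorem Wp_self (hp : 1 ≤ p) {d : Z → Z → ℝ≥0∞} (hd : ∀ᵐ x ∂a, d x x = 0)
    (hm : AEMeasurable (fun z : Z × Z => d z.1 z.2) (a.map (fun x => (x, x)))) : Wp p d a a = 0 := by
  have hC : a.map (fun x => (x, x)) ∈ Cpl a a := by
    constructor
    · rw [Measure.map_map measurable_fst (by fun_prop)]; exact Measure.map_id
    · rw [Measure.map_map measurable_snd (by fun_prop)]; exact Measure.map_id
  refine le_antisymm ((Wp_le p d hC).trans ?_) zero_le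
  · rw [lintegral_map' (hm.pow_const p) (by fun_prop)]
    rw [lintegral_congr_ae (g := fun _ => 0)]
    · simp; linarith
    · filter_upwards [hd] with x hx
      simp [hx]; linarith

end Couplings


section Base
variable {B : Type*} [MetricSpace B] [SecondCountableTopology B] [MeasurableSpace B]
  [BorelSpace B] [Nonempty B] {p : ℝ}

/-- Wasserstein distance on a metric space -/
abbrev W (p : ℝ) (m n : Measure B) : ℝ≥0∞ := Wp p (edist : B → B → ℝ≥0∞) m n

/-- `p`-th moment -/
def mom (p : ℝ) (m : Measure B) : ℝ≥0∞ := ∫⁻ x, edist (TopologicalSpace.denseSeq B 0) x ^ p ∂m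

theorem measurable_mom : Measurable (mom p : Measure B → ℝ≥0∞) :=
  Measure.measurable_lintegral (by fun_prop)

/-- the set `𝒫_p` -/
def Pp (p : ℝ) : Set (Measure B) := {m | MemPp p (edist : B → B → ℝ≥0∞) m}

theorem exists_bcell (ε : ℝ≥0∞) (hε : 0 < ε) :
    ∃ t : B → ℕ, Measurable t ∧ ∀ x, edist x (TopologicalSpace.denseSeq B (t x)) ≤ ε := by
  classical
  have h : ∀ x : B, ∃ k, edist x (TopologicalSpace.denseSeq B k) < ε := by
    intro x
    have := EMetric.mem_closure_iff.1
      ((TopologicalSpace.denseRange_denseSeq B).closure_eq ▸ Set.mem_univ x) ε hε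
    obtain ⟨_, ⟨k, rfl⟩, hk⟩ := this
    exact ⟨k, hk⟩
  refine ⟨fun x => Nat.find (h x), measurable_find h ?_, fun x => (Nat.find_spec (h x)).le⟩
  intro k
  exact measurableSet_lt (by fun_prop) measurable_const

theorem measOn_edist : MeasOn (Set.univ) (edist : B → B → ℝ≥0∞) :=
  ⟨fun z => edist z.1 z.2, by fun_prop, by simp⟩

theorem W_triangle (hp : 1 ≤ p) (a b c : Measure B) [IsProbabilityMeasure a]
    [IsProbabilityMeasure b] [IsProbabilityMeasure c] : W p a c ≤ W p a b + W p b c := by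
  refine Wp_triangle_gen hp edist Set.univ (by simp) (by simp) (by simp) measOn_edist
    (fun x _ y _ z _ => edist_triangle _ _ _) ?_
  intro ε hε hε'
  obtain ⟨t, ht, h⟩ := exists_bcell (B := B) (ε / 2) (ENNReal.half_pos hε.ne')
  refine ⟨t, ht, fun x _ y _ hxy => ?_⟩
  calc edist x y ≤ edist x (TopologicalSpace.denseSeq B (t x)) +
        edist (TopologicalSpace.denseSeq B (t x)) y := edist_triangle _ _ _
    _ ≤ ε / 2 + ε / 2 := by
      gcongr
      · exact h x
      · rw [hxy, edist_comm]; exact h y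
    _ = ε := ENNReal.add_halves ε

theorem W_comm (a b : Measure B) : W p a b = W p b a :=
  le_antisymm (Wp_symm p edist_comm _ _) (Wp_symm p edist_comm _ _)

theorem W_self (hp : 1 ≤ p) (a : Measure B) : W p a a = 0 :=
  Wp_self hp (by simp) (by fun_prop)

theorem W_map_le (hp : 1 ≤ p) (m : Measure B) {T : B → B} (hT : Measurable T) :
    W p m (m.map T) ≤ (∫⁻ x, edist x (T x) ^ p ∂m) ^ (1 / p) := by
  have hC : m.map (fun x => (x, T x)) ∈ Cpl m (m.map T) := by
    constructor
    · rw [Measure.map_map measurable_fst (by fun_prop)]; exact Measure.map_id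
    · rw [Measure.map_map measurable_snd (by fun_prop)]; rfl
  refine (Wp_le p _ hC).trans ?_
  rw [lintegral_map (by fun_prop) (by fun_prop)]

theorem mom_le (hp : 1 ≤ p) (x₀ : B) (m n : Measure B) :
    (∫⁻ x, edist x₀ x ^ p ∂m) ^ (1 / p) ≤ (∫⁻ x, edist x₀ x ^ p ∂n) ^ (1 / p) + W p n m := by
  unfold W Wp
  rw [ENNReal.add_iInf]
  simp_rw [ENNReal.add_iInf]
  refine le_iInf₂ fun γ hγ => ?_
  conv_lhs => rw [← hγ.2]
  conv_rhs => rw [← hγ.1]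
  rw [lintegral_map (by fun_prop) (by fun_prop), lintegral_map (by fun_prop) (by fun_prop)]
  rw [← nrm2_zero_right hp, ← nrm2_zero_right hp, ← nrm2_zero_right hp]
  refine le_trans ?_ (nrm2_add_le hp (by fun_prop) (by fun_prop) (by fun_prop) (by fun_prop))
  refine nrm2_mono hp ?_ (by simp)
  exact .of_forall fun z => edist_triangle _ _ _

theorem mem_Pp_iff (hp : 1 ≤ p) (m : Measure B) :
    m ∈ Pp p ↔ m Set.univ = 1 ∧ mom p m ≠ ∞ := by
  constructor
  · rintro ⟨h1, x, hx⟩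
    refine ⟨measure_univ, ?_⟩
    have hc : (∫⁻ y, edist (TopologicalSpace.denseSeq B 0) y ^ p ∂m) ^ (1 / p) ≤
        edist (TopologicalSpace.denseSeq B 0) x + (∫⁻ y, edist x y ^ p ∂m) ^ (1 / p) := by
      calc _ = nrm2 p m (fun y => edist (TopologicalSpace.denseSeq B 0) y) (fun _ => 0) := by
            rw [nrm2_zero_right hp]
        _ ≤ nrm2 p m (fun y => edist (TopologicalSpace.denseSeq B 0) x + edist x y)
            (fun _ => 0 + 0) :=
          nrm2_mono hp (.of_forall fun y => edist_triangle _ _ _) (by simp)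
        _ ≤ _ := nrm2_add_le hp (by fun_prop) (by fun_prop) (by fun_prop) (by fun_prop)
        _ ≤ _ := by
          rw [nrm2_zero_right hp (fun y => edist x y)]
          gcongr
          exact (nrm2_const_le hp _ _).trans (by simp)
    intro h
    have h' : (∫⁻ y, edist (TopologicalSpace.denseSeq B 0) y ^ p ∂m) = ∞ := h
    rw [h', ENNReal.top_rpow_of_pos (by positivity)] at hc
    refine absurd hc (not_le.2 (ENNReal.add_lt_top.2 ⟨edist_lt_top _ _, ?_⟩))
    exact ENNReal.rpow_lt_top_of_nonneg (by positivity) hx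
  · rintro ⟨h1, h2⟩
    exact ⟨⟨h1⟩, _, h2⟩

theorem measurableSet_Pp (hp : 1 ≤ p) : MeasurableSet (Pp p : Set (Measure B)) := by
  have : (Pp p : Set (Measure B)) = {m | m Set.univ = 1} ∩ {m | mom p m = ∞}ᶜ := by
    ext m; simp [mem_Pp_iff hp]
  rw [this]
  exact (measurableSet_eq_fun (Measure.measurable_coe MeasurableSet.univ) measurable_const).inter
    (measurableSet_eq_fun measurable_mom measurable_const).compl

theorem Pp_prob {m : Measure B} (h : m ∈ Pp p) : IsProbabilityMeasure m := h.1

/-! total variation estimate -/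

theorem map_finite (m : Measure B) {t : B → ℕ} (ht : Measurable t) {N : ℕ} (htN : ∀ x, t x ≤ N)
    (y : ℕ → B) :
    m.map (fun x => y (t x)) =
      ∑ k ∈ Finset.range (N + 1), m (t ⁻¹' {k}) • Measure.dirac (y k) := by
  ext s hs
  have hm : Measurable (fun x => y (t x)) := measurable_from_top.comp ht
  rw [Measure.map_apply hm hs]
  have : (fun x => y (t x)) ⁻¹' s =
      ⋃ k ∈ Finset.range (N + 1), (t ⁻¹' {k} ∩ {x | y k ∈ s}) := by
    ext x
    have := htN x
    simp only [Set.mem_preimage, Finset.mem_range, Set.mem_iUnion, Set.mem_inter_iff,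
      Set.mem_singleton_iff, Set.mem_ofPred_eq, exists_prop]
    exact ⟨fun h => ⟨t x, by omega, rfl, h⟩, fun ⟨k, _, h, h'⟩ => h ▸ h'⟩
  rw [this, measure_biUnion_finset]
  · simp only [Measure.coe_finsetSum, Finset.sum_apply, Measure.smul_apply, smul_eq_mul,
      Measure.dirac_apply' _ hs]
    refine Finset.sum_congr rfl fun k _ => ?_
    by_cases h : y k ∈ s <;> simp [h]
  · intro a _ b _ hab
    exact Set.disjoint_left.2 (by simp; grind)
  · intro k _
    exact (ht (by measurability)).inter (by simp)

theorem TV_le (hp : 1 ≤ p) {N : ℕ} (y : ℕ → B) (D : ℝ≥0∞)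
    (hD : ∀ k ≤ N, ∀ l ≤ N, edist (y k) (y l) ≤ D) (u v : ℕ → ℝ≥0∞)
    (hu : ∑ k ∈ Finset.range (N + 1), u k = 1) (hv : ∑ k ∈ Finset.range (N + 1), v k = 1) :
    W p (∑ k ∈ Finset.range (N + 1), u k • Measure.dirac (y k))
        (∑ k ∈ Finset.range (N + 1), v k • Measure.dirac (y k)) ≤
      (D ^ p * ∑ k ∈ Finset.range (N + 1), (u k - v k)) ^ (1 / p) := by
  set S := Finset.range (N + 1) with hS
  set r := ∑ k ∈ S, (u k - v k) with hr
  have hc1 : ∀ k, min (u k) (v k) + (u k - v k) = u k := fun k => by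
    rcases le_total (u k) (v k) with h | h
    · simp [h, tsub_eq_zero_of_le h]
    · simp [h, tsub_eq_zero_of_le h]
  have hc2 : ∀ k, min (u k) (v k) + (v k - u k) = v k := fun k => by
    rcases le_total (u k) (v k) with h | h
    · simp [h, tsub_eq_zero_of_le h]
    · simp [h, tsub_eq_zero_of_le h]
  have hmin : ∑ k ∈ S, min (u k) (v k) ≤ 1 := hu ▸ Finset.sum_le_sum fun k _ => min_le_left _ _
  have hr2 : ∑ k ∈ S, (v k - u k) = r := by
    have e1 : ∑ k ∈ S, min (u k) (v k) + r = 1 := by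
      rw [hr, ← Finset.sum_add_distrib, ← hu]; exact Finset.sum_congr rfl fun k _ => hc1 k
    have e2 : ∑ k ∈ S, min (u k) (v k) + ∑ k ∈ S, (v k - u k) = 1 := by
      rw [← Finset.sum_add_distrib, ← hv]; exact Finset.sum_congr rfl fun k _ => hc2 k
    exact (ENNReal.add_right_inj (ne_top_of_le_ne_top (by simp) hmin)).1 (e2.trans e1.symm)
  have hr1 : r ≤ 1 := hu ▸ Finset.sum_le_sum fun k _ => tsub_le_self
  have hrt : r ≠ ∞ := ne_top_of_le_ne_top (by simp) hr1
  have hrr : ∀ k ∈ S, (u k - v k) * r⁻¹ * r = (u k - v k) := by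
    intro k hk
    by_cases h0 : r = 0
    · have : u k - v k = 0 := Finset.sum_eq_zero_iff.1 (hr.symm.trans h0) k hk
      simp [this]
    · rw [mul_assoc, ENNReal.inv_mul_cancel h0 hrt, mul_one]
  have hrr' : ∀ k ∈ S, r * r⁻¹ * (v k - u k) = (v k - u k) := by
    intro k hk
    by_cases h0 : r = 0
    · have : v k - u k = 0 := Finset.sum_eq_zero_iff.1 (hr2.trans h0) k hk
      simp [this]
    · rw [ENNReal.mul_inv_cancel h0 hrt, one_mul]
  let π : Measure (B × B) := ∑ k ∈ S, min (u k) (v k) • Measure.dirac (y k, y k) +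
    ∑ k ∈ S, ∑ l ∈ S, ((u k - v k) * r⁻¹ * (v l - u l)) • Measure.dirac (y k, y l)
  have hC : π ∈ Cpl (∑ k ∈ S, u k • Measure.dirac (y k)) (∑ k ∈ S, v k • Measure.dirac (y k)) := by
    constructor
    · ext s hs
      rw [Measure.map_apply measurable_fst hs]
      simp only [π, Measure.add_apply, Measure.coe_finsetSum, Finset.sum_apply,
        Measure.smul_apply, smul_eq_mul, Measure.dirac_apply' _ hs,
        Measure.dirac_apply' _ (measurable_fst hs)]
      rw [← Finset.sum_add_distrib]
      refine Finset.sum_congr rfl fun k hk => ?_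
      have : ∀ l, (Prod.fst ⁻¹' s : Set (B × B)).indicator (1 : B × B → ℝ≥0∞) (y k, y l) =
        s.indicator 1 (y k) := fun l => rfl
      simp_rw [this]
      rw [← Finset.sum_mul, ← Finset.mul_sum, hr2, hrr k hk, ← add_mul, hc1]
    · ext s hs
      rw [Measure.map_apply measurable_snd hs]
      simp only [π, Measure.add_apply, Measure.coe_finsetSum, Finset.sum_apply,
        Measure.smul_apply, smul_eq_mul, Measure.dirac_apply' _ hs,
        Measure.dirac_apply' _ (measurable_snd hs)]
      rw [Finset.sum_comm, ← Finset.sum_add_distrib]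
      refine Finset.sum_congr rfl fun l hl => ?_
      have : ∀ k, (Prod.snd ⁻¹' s : Set (B × B)).indicator (1 : B × B → ℝ≥0∞) (y k, y l) =
        s.indicator 1 (y l) := fun l => rfl
      simp_rw [this]
      rw [← Finset.sum_mul, ← Finset.sum_mul, ← Finset.sum_mul, ← hr, hrr' l hl, ← add_mul, hc2]
  refine (Wp_le p _ hC).trans (ENNReal.rpow_le_rpow ?_ (by positivity))
  simp only [π, lintegral_add_measure, lintegral_finsetSum_measure, lintegral_smul_measure,
    lintegral_dirac, edist_self, smul_eq_mul]
  rw [ENNReal.zero_rpow_of_pos (by linarith)]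
  simp only [mul_zero, Finset.sum_const_zero, zero_add]
  calc _ ≤ ∑ k ∈ S, ∑ l ∈ S, ((u k - v k) * r⁻¹ * (v l - u l)) * D ^ p := by
        refine Finset.sum_le_sum fun k hk => Finset.sum_le_sum fun l hl => ?_
        gcongr
        refine hD _ ?_ _ ?_
        · simp [hS] at hk; omega
        · simp [hS] at hl; omega
    _ = ∑ k ∈ S, (u k - v k) * D ^ p := by
        refine Finset.sum_congr rfl fun k hk => ?_
        rw [← Finset.sum_mul, ← Finset.mul_sum, hr2, hrr k hk]
    _ = _ := by rw [← Finset.sum_mul, mul_comm]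

theorem W_le_disc (hp : 1 ≤ p) (m n : Measure B) [IsProbabilityMeasure m] [IsProbabilityMeasure n]
    {t : B → ℕ} (ht : Measurable t) {N : ℕ} (htN : ∀ x, t x ≤ N)
    (y : ℕ → B) (D : ℝ≥0∞) (hD : ∀ k ≤ N, ∀ l ≤ N, edist (y k) (y l) ≤ D) :
    W p m n ≤ (∫⁻ x, edist x (y (t x)) ^ p ∂m) ^ (1 / p) +
      ((∫⁻ x, edist x (y (t x)) ^ p ∂n) ^ (1 / p) +
      (D ^ p * ∑ k ∈ Finset.range (N + 1), (m (t ⁻¹' {k}) - n (t ⁻¹' {k}))) ^ (1 / p)) := by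
  have hm : Measurable (fun x => y (t x)) := measurable_from_top.comp ht
  have := Measure.isProbabilityMeasure_map (μ := m) hm.aemeasurable
  have := Measure.isProbabilityMeasure_map (μ := n) hm.aemeasurable
  have hsum : ∀ m : Measure B, IsProbabilityMeasure m →
      ∑ k ∈ Finset.range (N + 1), m (t ⁻¹' {k}) = 1 := by
    intro m hm'
    have := congrArg (fun q => q Set.univ) (map_finite m ht htN y)
    simp only [Measure.coe_finsetSum, Finset.sum_apply, Measure.smul_apply, smul_eq_mul,
      measure_univ, mul_one] at this
    rw [← this, Measure.map_apply hm .univ]; simp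
  have h1 := W_triangle hp m (m.map (fun x => y (t x))) n
  have h2 := W_triangle hp (m.map (fun x => y (t x))) (n.map (fun x => y (t x))) n
  have h3 := W_map_le hp m hm
  have h4 := W_map_le hp n hm
  rw [W_comm] at h4
  have h5 : W p (m.map (fun x => y (t x))) (n.map (fun x => y (t x))) ≤
      (D ^ p * ∑ k ∈ Finset.range (N + 1), (m (t ⁻¹' {k}) - n (t ⁻¹' {k}))) ^ (1 / p) := by
    rw [map_finite m ht htN, map_finite n ht htN]
    exact TV_le hp y D hD _ _ (hsum m inferInstance) (hsum n inferInstance)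
  calc W p m n ≤ _ := h1
    _ ≤ _ := by
      gcongr
      refine h2.trans ?_
      rw [add_comm]
      gcongr

end Base


section Base
variable {B : Type*} [MetricSpace B] [SecondCountableTopology B] [MeasurableSpace B]
  [BorelSpace B] [Nonempty B] {p : ℝ}

/-- truncated index -/
def trunc (t : B → ℕ) (N : ℕ) : B → ℕ := fun x => if t x ≤ N then t x else 0

theorem measurable_trunc {t : B → ℕ} (ht : Measurable t) (N : ℕ) : Measurable (trunc t N) :=
  (measurable_from_top (f := fun k : ℕ => if k ≤ N then k else 0)).comp ht

theorem trunc_le (t : B → ℕ) (N : ℕ) (x : B) : trunc t N x ≤ N := by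
  unfold trunc; split_ifs <;> omega

theorem exists_trunc (hp : 1 ≤ p) {ε : ℝ≥0∞} (hε : 0 < ε) (hε' : ε ≠ ∞) {t : B → ℕ} (ht : Measurable t)
    (h : ∀ x, edist x (TopologicalSpace.denseSeq B (t x)) ≤ ε) {m : Measure B} (hm : m ∈ Pp p) :
    ∃ N, ∫⁻ x, edist x (TopologicalSpace.denseSeq B (trunc t N x)) ^ p ∂m ≤ 2 * ε ^ p := by
  obtain ⟨h1, h2⟩ := (mem_Pp_iff hp m).1 hm
  set x₀ := TopologicalSpace.denseSeq B 0 with hx0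
  set ν := m.withDensity (fun x => edist x₀ x ^ p) with hν
  have hfin : IsFiniteMeasure ν := ⟨by
    rw [hν, withDensity_apply _ .univ, Measure.restrict_univ]; exact lt_top_iff_ne_top.2 h2⟩
  have hanti : Antitone (fun N : ℕ => {x : B | N < t x}) := by
    intro a b hab x hx
    have : b < t x := hx
    exact lt_of_le_of_lt hab this
  have hms : ∀ N : ℕ, MeasurableSet {x : B | N < t x} := fun N => measurableSet_lt measurable_const ht
  have hlim := tendsto_measure_iInter_atTop (μ := ν) (s := fun N : ℕ => {x : B | N < t x})
    (fun N => (hms N).nullMeasurableSet) hanti ⟨0, measure_ne_top _ _⟩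
  have hempty : (⋂ N : ℕ, {x : B | N < t x}) = ∅ := by
    ext x; simp only [Set.mem_iInter, Set.mem_ofPred_eq, Set.mem_empty_iff_false, iff_false]
    intro h; exact lt_irrefl _ (h (t x))
  rw [hempty, measure_empty] at hlim
  have hpos : 0 < ε ^ p := ENNReal.rpow_pos hε hε'
  obtain ⟨N, hN⟩ := (hlim.eventually_lt_const hpos).exists
  refine ⟨N, ?_⟩
  have hpt : ∀ x, edist x (TopologicalSpace.denseSeq B (trunc t N x)) ^ p ≤
      ε ^ p + {x : B | N < t x}.indicator (fun x => edist x₀ x ^ p) x := by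
    intro x
    unfold trunc
    split_ifs with hx
    · exact le_add_right (ENNReal.rpow_le_rpow (h x) (by linarith))
    · refine le_add_left ?_
      have hx' : x ∈ {x : B | N < t x} := not_le.1 hx
      rw [Set.indicator_of_mem hx', edist_comm]
  calc _ ≤ ∫⁻ x, ε ^ p + {x : B | N < t x}.indicator (fun x => edist x₀ x ^ p) x ∂m :=
        lintegral_mono hpt
    _ = ε ^ p + ν {x : B | N < t x} := by
        rw [lintegral_add_left measurable_const, lintegral_const, h1, mul_one,
          lintegral_indicator (hms N), hν, withDensity_apply _ (hms N)]
    _ ≤ ε ^ p + ε ^ p := by gcongr; exact hN.le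
    _ = _ := (two_mul _).symm

theorem exists_floor {x η : ℝ≥0∞} (hx : x ≠ ∞) (h0 : η ≠ 0) (ht : η ≠ ∞) :
    ∃ n : ℕ, n * η ≤ x ∧ x ≤ (n + 1) * η := by
  refine ⟨⌊(x / η).toReal⌋₊, ?_, ?_⟩
  · rw [← ENNReal.le_div_iff_mul_le (.inl h0) (.inl ht)]
    have := Nat.floor_le (a := (x / η).toReal) ENNReal.toReal_nonneg
    rw [← ENNReal.ofReal_natCast]
    exact ENNReal.ofReal_le_of_le_toReal this
  · rw [← ENNReal.div_le_iff h0 ht]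
    have := Nat.lt_floor_add_one (x / η).toReal
    have hfin : x / η ≠ ∞ := ENNReal.div_ne_top hx h0
    rw [← ENNReal.ofReal_toReal hfin]
    refine (ENNReal.ofReal_le_ofReal this.le).trans ?_
    rw [ENNReal.toReal_ofReal ENNReal.toReal_nonneg,
      ENNReal.ofReal_add (by positivity) (by norm_num)]
    simp

theorem join_lintegral_le {Q : Measure (Measure B)} [IsProbabilityMeasure Q] {f : B → ℝ≥0∞}
    (hf : Measurable f) {c : ℝ≥0∞} (h : ∀ᵐ m ∂Q, ∫⁻ x, f x ∂m ≤ c) : ∫⁻ x, f x ∂Q.join ≤ c := by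
  rw [Measure.lintegral_join hf.aemeasurable]
  calc _ ≤ ∫⁻ _, c ∂Q := lintegral_mono_ae h
    _ = c := by simp

theorem join_le {Q : Measure (Measure B)} [IsProbabilityMeasure Q] {s : Set B}
    (hs : MeasurableSet s) {c : ℝ≥0∞} (h : ∀ᵐ m ∂Q, m s ≤ c) : Q.join s ≤ c := by
  rw [Measure.join_apply hs]
  calc _ ≤ ∫⁻ _, c ∂Q := lintegral_mono_ae h
    _ = c := by simp

theorem le_join {Q : Measure (Measure B)} [IsProbabilityMeasure Q] {s : Set B}
    (hs : MeasurableSet s) {c : ℝ≥0∞} (h : ∀ᵐ m ∂Q, c ≤ m s) : c ≤ Q.join s := by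
  rw [Measure.join_apply hs]
  calc c = ∫⁻ _, c ∂Q := by simp
    _ ≤ _ := lintegral_mono_ae h

theorem exists_cells_aux (hp : 1 ≤ p) {ε : ℝ≥0∞} (hε : 0 < ε) (hε' : ε ≠ ∞) :
    ∃ C : (Σ N : ℕ, ℕ × (Fin (N + 1) → ℕ)) → Set (Measure B), (∀ q, MeasurableSet (C q)) ∧
      (∀ q, C q ⊆ Pp p) ∧
      (∀ m ∈ Pp p, ∃ q, m ∈ C q) ∧ (∀ q, ∀ m ∈ C q, ∀ n ∈ C q, W p m n ≤ 5 * ε) ∧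
      (∀ q, ∀ Q : Measure (Measure B), IsProbabilityMeasure Q → (∀ᵐ m ∂Q, m ∈ C q) →
        Q.join ∈ C q) := by
  obtain ⟨t, ht, hte⟩ := exists_bcell (B := B) ε hε
  let y := TopologicalSpace.denseSeq B
  let D : ℕ → ℝ≥0∞ := fun N => ∑ k ∈ Finset.range (N + 1), ∑ l ∈ Finset.range (N + 1),
    edist (y k) (y l)
  have hDt : ∀ N, D N ≠ ∞ := fun N => by
    simp only [D, ne_eq, ENNReal.sum_eq_top, not_exists, not_and]
    exact fun k _ l _ => edist_ne_top _ _
  have hD : ∀ N, ∀ k ≤ N, ∀ l ≤ N, edist (y k) (y l) ≤ D N := by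
    intro N k hk l hl
    calc edist (y k) (y l) ≤ ∑ l ∈ Finset.range (N + 1), edist (y k) (y l) :=
          Finset.single_le_sum (f := fun l => edist (y k) (y l)) (fun _ _ => zero_le)
            (Finset.mem_range.2 (by omega))
      _ ≤ _ := Finset.single_le_sum
            (f := fun k => ∑ l ∈ Finset.range (N + 1), edist (y k) (y l)) (fun _ _ => zero_le)
            (Finset.mem_range.2 (by omega))
  have hpos : 0 < ε ^ p := ENNReal.rpow_pos hε hε'
  have hept : ε ^ p ≠ ∞ := ENNReal.rpow_ne_top_of_nonneg (by linarith) hε'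
  let η : ℕ → ℝ≥0∞ := fun N => ε ^ p / (1 + D N ^ p * (N + 1))
  have hden : ∀ N : ℕ, (1 + D N ^ p * (N + 1)) ≠ ∞ := fun N => by
    have : D N ^ p ≠ ∞ := ENNReal.rpow_ne_top_of_nonneg (by linarith) (hDt N)
    finiteness
  have hden0 : ∀ N : ℕ, (1 + D N ^ p * (N + 1)) ≠ 0 := fun N => by simp
  have hη0 : ∀ N, η N ≠ 0 := fun N => ENNReal.div_ne_zero.2 ⟨hpos.ne', hden N⟩
  have hηt : ∀ N, η N ≠ ∞ := fun N => ENNReal.div_ne_top hept (hden0 N)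
  have hηD : ∀ N : ℕ, D N ^ p * ((N + 1) * η N) ≤ ε ^ p := fun N => by
    rw [← mul_assoc]
    calc _ ≤ (1 + D N ^ p * (N + 1)) * η N := by gcongr; exact le_add_self
      _ = _ := ENNReal.mul_div_cancel (hden0 N) (hden N)
  have hc : ∀ N, Measurable (fun x => edist x (y (trunc t N x)) ^ p) := fun N =>
    (measurable_id.edist (measurable_from_top.comp (measurable_trunc ht N))).pow_const p
  have hA : ∀ N k, MeasurableSet (trunc t N ⁻¹' {k}) := fun N k =>
    measurable_trunc ht N (by measurability)
  let C : (Σ N : ℕ, ℕ × (Fin (N + 1) → ℕ)) → Set (Measure B) := fun q =>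
    {m | m Set.univ = 1} ∩ {m | mom p m ≤ q.2.1} ∩
    {m | ∫⁻ x, edist x (y (trunc t q.1 x)) ^ p ∂m ≤ 2 * ε ^ p} ∩
    ⋂ k : Fin (q.1 + 1), {m | q.2.2 k * η q.1 ≤ m (trunc t q.1 ⁻¹' {k.1})} ∩
      {m | m (trunc t q.1 ⁻¹' {k.1}) ≤ (q.2.2 k + 1) * η q.1}
  refine ⟨C, ?_, ?_, ?_, ?_, ?_⟩
  · intro q
    refine (((measurableSet_eq_fun (Measure.measurable_coe .univ) measurable_const).inter
      (measurableSet_le measurable_mom measurable_const)).inter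
      (measurableSet_le (Measure.measurable_lintegral (hc _)) measurable_const)).inter
      (MeasurableSet.iInter fun k => ?_)
    exact (measurableSet_le measurable_const (Measure.measurable_coe (hA _ _))).inter
      (measurableSet_le (Measure.measurable_coe (hA _ _)) measurable_const)
  · rintro q m ⟨⟨⟨h1, h2⟩, -⟩, -⟩
    exact (mem_Pp_iff hp m).2 ⟨h1, ne_top_of_le_ne_top (by simp) h2⟩
  · intro m hm
    have := Pp_prob hm
    obtain ⟨h1, h2⟩ := (mem_Pp_iff hp m).1 hm
    obtain ⟨N, hN⟩ := exists_trunc hp hε hε' ht hte hm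
    obtain ⟨M, hM⟩ := ENNReal.exists_nat_gt h2
    choose v hv1 hv2 using fun k : Fin (N + 1) =>
      exists_floor (measure_ne_top m (trunc t N ⁻¹' {k.1})) (hη0 N) (hηt N)
    exact ⟨⟨N, M, v⟩, ⟨⟨⟨h1, hM.le⟩, hN⟩, Set.mem_iInter.2 fun k => ⟨hv1 k, hv2 k⟩⟩⟩
  · rintro q m ⟨⟨⟨h1, -⟩, h3⟩, h4⟩ n ⟨⟨⟨h1', -⟩, h3'⟩, h4'⟩
    have : IsProbabilityMeasure m := ⟨h1⟩
    have : IsProbabilityMeasure n := ⟨h1'⟩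
    have key := W_le_disc hp m n (measurable_trunc ht q.1) (trunc_le t q.1) y (D q.1) (hD q.1)
    have e2 : (2 * ε ^ p) ^ (1 / p) ≤ 2 * ε := by
      calc (2 * ε ^ p) ^ (1 / p) ≤ ((2 * ε) ^ p) ^ (1 / p) := by
            refine ENNReal.rpow_le_rpow ?_ (by positivity)
            rw [ENNReal.mul_rpow_of_nonneg _ _ (by linarith : 0 ≤ p)]
            gcongr
            calc (2 : ℝ≥0∞) = 2 ^ (1 : ℝ) := by simp
              _ ≤ _ := ENNReal.rpow_le_rpow_of_exponent_le (by norm_num) hp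
        _ = _ := rpow_inv_p hp _
    have e3 : ∑ k ∈ Finset.range (q.1 + 1), (m (trunc t q.1 ⁻¹' {k}) - n (trunc t q.1 ⁻¹' {k})) ≤
        (q.1 + 1) * η q.1 := by
      calc _ ≤ ∑ k ∈ Finset.range (q.1 + 1), η q.1 := by
            refine Finset.sum_le_sum fun k hk => ?_
            have hk := Finset.mem_range.1 hk
            have a := (Set.mem_iInter.1 h4 ⟨k, hk⟩).2
            have b := (Set.mem_iInter.1 h4' ⟨k, hk⟩).1
            rw [tsub_le_iff_left]
            refine le_trans a ?_
            rw [add_mul, one_mul]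
            gcongr
            exact b
        _ = _ := by simp
    calc W p m n ≤ _ := key
      _ ≤ 2 * ε + (2 * ε + ε) := by
        gcongr
        · exact le_trans (ENNReal.rpow_le_rpow h3 (by positivity)) e2
        · exact le_trans (ENNReal.rpow_le_rpow h3' (by positivity)) e2
        · calc _ ≤ (ε ^ p) ^ (1 / p) := by
                refine ENNReal.rpow_le_rpow (le_trans ?_ (hηD q.1)) (by positivity)
                gcongr
            _ = ε := rpow_inv_p hp _
      _ = 5 * ε := by ring
  · intro q Q hQ hm
    refine ⟨⟨⟨?_, ?_⟩, ?_⟩, Set.mem_iInter.2 fun k => ⟨?_, ?_⟩⟩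
    · exact le_antisymm (join_le .univ (hm.mono fun m h => h.1.1.1.le))
        (le_join .univ (hm.mono fun m h => h.1.1.1.ge))
    · exact join_lintegral_le (by fun_prop) (hm.mono fun m h => h.1.1.2)
    · exact join_lintegral_le (hc _) (hm.mono fun m h => h.1.2)
    · exact le_join (hA _ _) (hm.mono fun m h => (Set.mem_iInter.1 h.2 k).1)
    · exact join_le (hA _ _) (hm.mono fun m h => (Set.mem_iInter.1 h.2 k).2)

theorem exists_cells (hp : 1 ≤ p) {ε : ℝ≥0∞} (hε : 0 < ε) (hε' : ε ≠ ∞) :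
    ∃ (C : ℕ → Set (Measure B)) (i : Measure B → ℕ), Measurable i ∧
      (∀ q, C q ⊆ Pp p) ∧
      (∀ m ∈ Pp p, m ∈ C (i m)) ∧ (∀ q, ∀ m ∈ C q, ∀ n ∈ C q, W p m n ≤ ε) ∧
      (∀ q, ∀ Q : Measure (Measure B), IsProbabilityMeasure Q → (∀ᵐ m ∂Q, m ∈ C q) →
        Q.join ∈ C q) ∧ ∀ q, MeasurableSet (C q) := by
  classical
  obtain ⟨C, h1, h2, h3, h4, h5⟩ := exists_cells_aux (B := B) hp (ε := ε / 5)
    (ENNReal.div_pos hε.ne' (by simp)) (ENNReal.div_ne_top hε' (by simp))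
  obtain ⟨f, hf⟩ := exists_surjective_nat (Σ N : ℕ, ℕ × (Fin (N + 1) → ℕ))
  have hex : ∀ m : Measure B, ∃ k, m ∈ C (f k) ∨ m ∉ Pp p := by
    intro m
    by_cases hm : m ∈ Pp p
    · obtain ⟨q, hq⟩ := h3 m hm
      obtain ⟨k, rfl⟩ := hf q
      exact ⟨k, .inl hq⟩
    · exact ⟨0, .inr hm⟩
  refine ⟨fun k => C (f k), fun m => Nat.find (hex m), measurable_find hex ?_, fun q => h2 _, ?_, ?_,
    fun q => h5 _, fun q => h1 _⟩
  · intro k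
    exact (h1 _).union (measurableSet_Pp hp).compl
  · intro m hm
    exact (Nat.find_spec (hex m)).resolve_right (by simpa using hm)
  · intro q m hm n hn
    refine (h4 _ m hm n hn).trans (le_of_eq ?_)
    exact ENNReal.mul_div_cancel (by simp) (by simp)

theorem W_cell_le (hp : 1 ≤ p) {m n m' n' : Measure B} {ε : ℝ≥0∞} (hm : m ∈ Pp p) (hn : n ∈ Pp p)
    (hm' : m' ∈ Pp p) (hn' : n' ∈ Pp p) (h1 : W p m m' ≤ ε) (h2 : W p n n' ≤ ε) :
    W p m n ≤ W p m' n' + 2 * ε := by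
  have := Pp_prob hm
  have := Pp_prob hn
  have := Pp_prob hm'
  have := Pp_prob hn'
  calc W p m n ≤ W p m m' + (W p m' n' + W p n' n) :=
        (W_triangle hp m m' n).trans (by gcongr; exact W_triangle hp _ _ _)
    _ ≤ ε + (W p m' n' + ε) := by
        gcongr
        rw [W_comm]; exact h2
    _ = _ := by ring

theorem measurable_label2 {Ω X : Type*} [MeasurableSpace Ω] [MeasurableSpace X] (F : ℕ → ℕ → X)
    {i j : Ω → ℕ} (hi : Measurable i) (hj : Measurable j) :
    Measurable (fun z => F (i z) (j z)) := by
  have h : Measurable (fun k : ℕ × ℕ => F k.1 k.2) := Measurable.of_discrete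
  exact h.comp (hi.prodMk hj)

theorem measOn_W (hp : 1 ≤ p) : MeasOn (Pp p) (W p : Measure B → Measure B → ℝ≥0∞) := by
  classical
  have he : ∀ n : ℕ, 0 < ((n : ℝ≥0∞) + 1)⁻¹ ∧ ((n : ℝ≥0∞) + 1)⁻¹ ≠ ∞ := fun n => by
    constructor
    · simp
    · simp
  choose C i hi h1 h2 h3 _ _ using fun n : ℕ => exists_cells (B := B) hp (he n).1 (he n).2
  let rep : ℕ → ℕ → Measure B := fun n q => if h : (C n q).Nonempty then h.some else 0
  have hrep : ∀ n, ∀ m ∈ Pp p, rep n (i n m) ∈ C n (i n m) := fun n m hm => by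
    have : (C n (i n m)).Nonempty := ⟨m, h2 n m hm⟩
    simp only [rep, dif_pos this]
    exact this.some_mem
  let a : ℕ → Measure B × Measure B → ℝ≥0∞ := fun n z => W p (rep n (i n z.1)) (rep n (i n z.2))
  refine ⟨fun z => limsup (fun n => a n z) atTop, ?_, ?_⟩
  · refine Measurable.limsup fun n => ?_
    exact measurable_label2 (fun k l => W p (rep n k) (rep n l)) ((hi n).comp measurable_fst)
      ((hi n).comp measurable_snd)
  · intro x hx y hy
    have hlim0 : Tendsto (fun n : ℕ => 2 * ((n : ℝ≥0∞) + 1)⁻¹) atTop (𝓝 0) := by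
      have h := (tendsto_add_atTop_iff_nat 1).2 ENNReal.tendsto_inv_nat_nhds_zero
      have := ENNReal.Tendsto.const_mul (a := 2) h (.inr (by simp))
      simpa using this
    have hle : ∀ n, W p x y ≤ a n (x, y) + 2 * ((n : ℝ≥0∞) + 1)⁻¹ := fun n =>
      W_cell_le hp hx hy (h1 n _ (hrep n x hx)) (h1 n _ (hrep n y hy))
        (h3 n _ _ (h2 n x hx) _ (hrep n x hx)) (h3 n _ _ (h2 n y hy) _ (hrep n y hy))
    have hge : ∀ n, a n (x, y) ≤ W p x y + 2 * ((n : ℝ≥0∞) + 1)⁻¹ := fun n =>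
      W_cell_le hp (h1 n _ (hrep n x hx)) (h1 n _ (hrep n y hy)) hx hy
        (h3 n _ _ (hrep n x hx) _ (h2 n x hx)) (h3 n _ _ (hrep n y hy) _ (h2 n y hy))
    refine (Tendsto.limsup_eq ?_).symm
    refine tendsto_of_tendsto_of_tendsto_of_le_of_le
      (g := fun n : ℕ => W p x y - 2 * ((n : ℝ≥0∞) + 1)⁻¹)
      (h := fun n : ℕ => W p x y + 2 * ((n : ℝ≥0∞) + 1)⁻¹) ?_ ?_ ?_ ?_
    · simpa using ENNReal.Tendsto.sub (tendsto_const_nhds (x := W p x y)) hlim0 (.inr (by simp))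
    · simpa using (tendsto_const_nhds (x := W p x y)).add hlim0
    · intro n; exact tsub_le_iff_right.2 (hle n)
    · exact hge

end Base


section Jensen
variable {B : Type*} [MetricSpace B] [SecondCountableTopology B] [MeasurableSpace B]
  [BorelSpace B] [Nonempty B] {p : ℝ} {Ω : Type*} [MeasurableSpace Ω]

theorem lintegral_bind' {P : Measure Ω} {U : Ω → Measure B} (hU : Measurable U) {f : B → ℝ≥0∞}
    (hf : Measurable f) : ∫⁻ x, f x ∂(P.bind U) = ∫⁻ ω, ∫⁻ x, f x ∂(U ω) ∂P :=
  Measure.lintegral_bind hU.aemeasurable hf.aemeasurable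

theorem exists_near_cpl (hp : 1 ≤ p) (m n : Measure B) [IsProbabilityMeasure m]
    [IsProbabilityMeasure n] {ε : ℝ≥0∞} (hε : 0 < ε) :
    ∃ γ ∈ Cpl m n, (∫⁻ z, edist z.1 z.2 ^ p ∂γ) ^ (1 / p) ≤ W p m n + ε := by
  by_cases h : W p m n = ∞
  · refine ⟨m.prod n, ⟨by simp, by simp⟩, ?_⟩
    rw [h]; simp
  · have : W p m n < W p m n + ε := ENNReal.lt_add_right h hε.ne'
    conv_lhs at this => unfold W Wp
    simp only [iInf_lt_iff] at this
    obtain ⟨γ, hγ, h⟩ := this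
    exact ⟨γ, hγ, h.le⟩

theorem le_of_forall_eps {a b : ℝ≥0∞} (c : ℕ) (h : ∀ ε : ℝ≥0∞, 0 < ε → ε ≠ ∞ → a ≤ b + c * ε) : a ≤ b := by
  refine ENNReal.le_of_forall_pos_le_add fun ε hε _ => ?_
  have h0 : (0:ℝ≥0∞) < ε / (c + 1) := ENNReal.div_pos (by simpa using hε.ne') (by finiteness)
  have := h (ε / (c + 1)) h0 (ENNReal.div_lt_top (by simp) (by simp)).ne
  refine this.trans ?_
  gcongr
  calc (c : ℝ≥0∞) * (ε / (c + 1)) ≤ (c + 1) * (ε / (c + 1)) := by gcongr; simp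
    _ = ε := ENNReal.mul_div_cancel (by simp) (by finiteness)

theorem W_bind_disc (hp : 1 ≤ p) {P : Measure Ω} [IsProbabilityMeasure P] {k : Ω → ℕ}
    (hk : Measurable k) (M N : ℕ → Measure B) (hM : ∀ q, IsProbabilityMeasure (M q))
    (hN : ∀ q, IsProbabilityMeasure (N q)) :
    W p (P.bind (fun ω => M (k ω))) (P.bind (fun ω => N (k ω))) ≤
      (∫⁻ ω, W p (M (k ω)) (N (k ω)) ^ p ∂P) ^ (1 / p) := by
  refine le_of_forall_eps 1 fun ε hε hε' => ?_
  choose γ hγ hle using fun q => exists_near_cpl hp (M q) (N q) hε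
  have hm : Measurable (fun ω => γ (k ω)) := (measurable_from_top (f := γ)).comp hk
  have hmM : Measurable (fun ω => M (k ω)) := (measurable_from_top (f := M)).comp hk
  have hmN : Measurable (fun ω => N (k ω)) := (measurable_from_top (f := N)).comp hk
  have hC : P.bind (fun ω => γ (k ω)) ∈ Cpl (P.bind (fun ω => M (k ω))) (P.bind (fun ω => N (k ω))) := by
    constructor
    · ext s hs
      rw [Measure.map_apply measurable_fst hs, Measure.bind_apply (measurable_fst hs) hm.aemeasurable,
        Measure.bind_apply hs hmM.aemeasurable]
      refine lintegral_congr fun ω => ?_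
      rw [← (hγ (k ω)).1, Measure.map_apply measurable_fst hs]
    · ext s hs
      rw [Measure.map_apply measurable_snd hs, Measure.bind_apply (measurable_snd hs) hm.aemeasurable,
        Measure.bind_apply hs hmN.aemeasurable]
      refine lintegral_congr fun ω => ?_
      rw [← (hγ (k ω)).2, Measure.map_apply measurable_snd hs]
  refine (Wp_le p _ hC).trans ?_
  rw [Measure.lintegral_bind hm.aemeasurable (by fun_prop)]
  have hWm : Measurable (fun ω => W p (M (k ω)) (N (k ω))) :=
    (measurable_from_top (f := fun q => W p (M q) (N q))).comp hk
  calc (∫⁻ ω, ∫⁻ z, edist z.1 z.2 ^ p ∂(γ (k ω)) ∂P) ^ (1 / p)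
      ≤ nrm2 p P (fun _ => 0 + 0) (fun ω => W p (M (k ω)) (N (k ω)) + ε) := by
        simp only [add_zero]
        rw [nrm2_zero_left hp]
        refine ENNReal.rpow_le_rpow (lintegral_mono fun ω => ?_) (by positivity)
        rw [← rpow_p_inv hp (∫⁻ z, edist z.1 z.2 ^ p ∂(γ (k ω)))]
        exact ENNReal.rpow_le_rpow (hle _) (by linarith)
    _ ≤ nrm2 p P (fun _ => 0) (fun ω => W p (M (k ω)) (N (k ω))) +
        nrm2 p P (fun _ => 0) (fun ω => ε) :=
        nrm2_add_le hp aemeasurable_const hWm.aemeasurable aemeasurable_const aemeasurable_const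
    _ ≤ _ := by
        rw [nrm2_zero_left hp]
        gcongr
        refine (nrm2_const_le hp 0 ε).trans ?_
        simp

open Classical in
/-- conditional barycenter of `U` given the discrete variable `J = k` -/
def cb (P : Measure Ω) (J : Ω → ℕ) (U : Ω → Measure B) (k : ℕ) : Measure B :=
  if P (J ⁻¹' {k}) = 0 then Measure.dirac (TopologicalSpace.denseSeq B 0) else (P[|J ⁻¹' {k}]).bind U

theorem cb_prob {P : Measure Ω} [IsProbabilityMeasure P] {J : Ω → ℕ} (hJ : Measurable J)
    {U : Ω → Measure B} (hU : Measurable U) (h : ∀ᵐ ω ∂P, IsProbabilityMeasure (U ω)) (k : ℕ) :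
    IsProbabilityMeasure (cb P J U k) := by
  unfold cb
  split_ifs with h0
  · infer_instance
  · have := ProbabilityTheory.cond_isProbabilityMeasure h0
    constructor
    rw [Measure.bind_apply MeasurableSet.univ hU.aemeasurable]
    have h' : ∀ᵐ ω ∂P[|J ⁻¹' {k}], U ω Set.univ = 1 := by
      have h2 : ∀ᵐ ω ∂P, U ω Set.univ = 1 := by
        filter_upwards [h] with ω hω using measure_univ
      exact ProbabilityTheory.cond_absolutelyContinuous.ae_le h2
    rw [lintegral_congr_ae h']; simp

theorem cb_lintegral {P : Measure Ω} [IsProbabilityMeasure P] {J : Ω → ℕ} (hJ : Measurable J)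
    {U : Ω → Measure B} (hU : Measurable U) {f : B → ℝ≥0∞} (hf : Measurable f) (k : ℕ) :
    P (J ⁻¹' {k}) * ∫⁻ x, f x ∂(cb P J U k) = ∫⁻ ω in J ⁻¹' {k}, ∫⁻ x, f x ∂(U ω) ∂P := by
  unfold cb
  split_ifs with h0
  · rw [h0, zero_mul, Measure.restrict_eq_zero.2 h0]; simp
  · rw [lintegral_bind' hU hf, lintegral_cond hJ]

theorem cb_bind {P : Measure Ω} [IsProbabilityMeasure P] {J : Ω → ℕ} (hJ : Measurable J)
    {U : Ω → Measure B} (hU : Measurable U) : P.bind (fun ω => cb P J U (J ω)) = P.bind U := by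
  have hm : Measurable (fun ω => cb P J U (J ω)) := (measurable_from_top (f := cb P J U)).comp hJ
  ext s hs
  rw [Measure.bind_apply hs hm.aemeasurable, Measure.bind_apply hs hU.aemeasurable,
    sum_label (Q := P) hJ, sum_label (Q := P) hJ]
  congr 1; ext k
  have h1 : ∫⁻ ω in J ⁻¹' {k}, cb P J U (J ω) s ∂P = ∫⁻ ω in J ⁻¹' {k}, cb P J U k s ∂P := by
    refine setLIntegral_congr_fun (hJ (by measurability)) fun ω hω => ?_
    simp only [Set.mem_preimage, Set.mem_singleton_iff] at hω
    simp only [hω]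
  have h2 := cb_lintegral (P := P) hJ hU (f := s.indicator 1) (measurable_one.indicator hs) k
  simp only [lintegral_indicator_one hs] at h2
  rw [h1, lintegral_const, ← h2, Measure.restrict_apply_univ, mul_comm]

theorem ae_cond_of_ae {P : Measure Ω} {s : Set Ω} (hs : MeasurableSet s) {q : Ω → Prop}
    (h : ∀ᵐ ω ∂P, q ω) : ∀ᵐ ω ∂P[|s], q ω ∧ ω ∈ s := by
  rw [ProbabilityTheory.cond]
  refine Measure.ae_smul_measure ?_ _
  filter_upwards [ae_restrict_of_ae h, ae_restrict_mem hs] with ω h1 h2 using ⟨h1, h2⟩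

/-- stability: the conditional barycenter stays in the cell. -/
theorem cb_mem {P : Measure Ω} [IsProbabilityMeasure P] {J : Ω → ℕ} (hJ : Measurable J)
    {U : Ω → Measure B} (hU : Measurable U) {k : ℕ} (hk : P (J ⁻¹' {k}) ≠ 0) {S : Set (Measure B)}
    (hS : ∀ Q : Measure (Measure B), IsProbabilityMeasure Q → (∀ᵐ m ∂Q, m ∈ S) → Q.join ∈ S)
    (hSm : MeasurableSet S)
    (h : ∀ᵐ ω ∂P, J ω = k → U ω ∈ S) : cb P J U k ∈ S := by
  have := ProbabilityTheory.cond_isProbabilityMeasure hk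
  rw [cb, if_neg hk]
  refine hS _ (Measure.isProbabilityMeasure_map hU.aemeasurable) ?_
  refine (ae_map_iff (p := fun m => m ∈ S) hU.aemeasurable hSm).2 ?_
  filter_upwards [ae_cond_of_ae (hJ (by measurability : MeasurableSet ({k} : Set ℕ))) h] with ω hω
  exact hω.1 hω.2

theorem cb_mem' {P : Measure Ω} [IsProbabilityMeasure P] {J : Ω → ℕ} (hJ : Measurable J)
    {U : Ω → Measure B} (hU : Measurable U) {S : ℕ → Set (Measure B)}
    (hS : ∀ k, ∀ Q : Measure (Measure B), IsProbabilityMeasure Q → (∀ᵐ m ∂Q, m ∈ S k) → Q.join ∈ S k)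
    (hSm : ∀ k, MeasurableSet (S k))
    (h : ∀ᵐ ω ∂P, U ω ∈ S (J ω)) : ∀ᵐ ω ∂P, cb P J U (J ω) ∈ S (J ω) := by
  filter_upwards [ae_label_pos (P := P) hJ] with ω hω
  refine cb_mem hJ hU hω (hS _) (hSm _) ?_
  filter_upwards [h] with ω' h' he
  rw [← he]; exact h'

theorem W_bind_le (hp : 1 ≤ p) {P : Measure Ω} [IsProbabilityMeasure P] {U V : Ω → Measure B}
    (hU : Measurable U) (hV : Measurable V) (hU' : ∀ᵐ ω ∂P, U ω ∈ Pp p) (hV' : ∀ᵐ ω ∂P, V ω ∈ Pp p) :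
    W p (P.bind U) (P.bind V) ≤ (∫⁻ ω, W p (U ω) (V ω) ^ p ∂P) ^ (1 / p) := by
  refine le_of_forall_eps 2 fun ε hε hε' => ?_
  obtain ⟨C, i, hi, h1, h2, h3, h4, h5⟩ := exists_cells (B := B) hp hε hε'
  let J : Ω → ℕ := fun ω => Nat.pair (i (U ω)) (i (V ω))
  have hJ : Measurable J := measurable_label2 Nat.pair (hi.comp hU) (hi.comp hV)
  have hJ1 : ∀ ω, (J ω).unpair.1 = i (U ω) := fun ω => by simp [J]
  have hJ2 : ∀ ω, (J ω).unpair.2 = i (V ω) := fun ω => by simp [J]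
  have hUC : ∀ᵐ ω ∂P, cb P J U (J ω) ∈ C (i (U ω)) := by
    have := cb_mem' (P := P) hJ hU (S := fun k => C k.unpair.1) (fun k => h4 _) (fun k => h5 _) (by
      filter_upwards [hU'] with ω hω
      rw [hJ1]; exact h2 _ hω)
    simpa only [hJ1] using this
  have hVC : ∀ᵐ ω ∂P, cb P J V (J ω) ∈ C (i (V ω)) := by
    have := cb_mem' (P := P) hJ hV (S := fun k => C k.unpair.2) (fun k => h4 _) (fun k => h5 _) (by
      filter_upwards [hV'] with ω hω
      rw [hJ2]; exact h2 _ hω)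
    simpa only [hJ2] using this
  have hW : AEMeasurable (fun ω => W p (U ω) (V ω)) P :=
    (measOn_W hp).aemeasurable hU.aemeasurable hV.aemeasurable hU' hV'
  rw [← cb_bind (P := P) hJ hU, ← cb_bind (P := P) hJ hV]
  refine (W_bind_disc hp hJ (cb P J U) (cb P J V)
    (cb_prob hJ hU (hU'.mono fun ω h => Pp_prob h)) (cb_prob hJ hV (hV'.mono fun ω h => Pp_prob h))).trans ?_
  calc (∫⁻ ω, W p (cb P J U (J ω)) (cb P J V (J ω)) ^ p ∂P) ^ (1 / p)
      = nrm2 p P (fun _ => 0) (fun ω => W p (cb P J U (J ω)) (cb P J V (J ω))) :=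
        (nrm2_zero_left hp _).symm
    _ ≤ nrm2 p P (fun _ => 0 + 0) (fun ω => W p (U ω) (V ω) + 2 * ε) := by
        refine nrm2_mono hp (by simp) ?_
        filter_upwards [hUC, hVC, hU', hV'] with ω a b c d
        exact W_cell_le hp (h1 _ a) (h1 _ b) c d (h3 _ _ a _ (h2 _ c)) (h3 _ _ b _ (h2 _ d))
    _ ≤ nrm2 p P (fun _ => 0) (fun ω => W p (U ω) (V ω)) + nrm2 p P (fun _ => 0) (fun _ => 2 * ε) :=
        nrm2_add_le hp aemeasurable_const hW aemeasurable_const aemeasurable_const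
    _ ≤ _ := by
        rw [nrm2_zero_left hp]
        gcongr
        refine (nrm2_const_le hp 0 _).trans ?_
        simp

/-- conditional Jensen -/
theorem W_cb_le (hp : 1 ≤ p) {P : Measure Ω} [IsProbabilityMeasure P] {U V : Ω → Measure B}
    (hU : Measurable U) (hV : Measurable V) (hU' : ∀ᵐ ω ∂P, U ω ∈ Pp p) (hV' : ∀ᵐ ω ∂P, V ω ∈ Pp p)
    {J : Ω → ℕ} (hJ : Measurable J) :
    ∫⁻ ω, W p (cb P J U (J ω)) (cb P J V (J ω)) ^ p ∂P ≤ ∫⁻ ω, W p (U ω) (V ω) ^ p ∂P := by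
  rw [sum_label (Q := P) hJ, sum_label (Q := P) hJ (fun ω => W p (U ω) (V ω) ^ p)]
  refine ENNReal.tsum_le_tsum fun k => ?_
  have h1 : ∫⁻ ω in J ⁻¹' {k}, W p (cb P J U (J ω)) (cb P J V (J ω)) ^ p ∂P =
      ∫⁻ ω in J ⁻¹' {k}, W p (cb P J U k) (cb P J V k) ^ p ∂P := by
    refine setLIntegral_congr_fun (hJ (by measurability)) fun ω hω => ?_
    simp only [Set.mem_preimage, Set.mem_singleton_iff] at hω
    simp only [hω]
  rw [h1, lintegral_const, Measure.restrict_apply_univ, ← lintegral_cond hJ, mul_comm]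
  by_cases h0 : P (J ⁻¹' {k}) = 0
  · rw [h0]; simp
  gcongr
  have := ProbabilityTheory.cond_isProbabilityMeasure h0
  have hac := ProbabilityTheory.cond_absolutelyContinuous (μ := P) (s := J ⁻¹' {k})
  rw [cb, cb, if_neg h0, if_neg h0, ← rpow_p_inv hp (∫⁻ ω, W p (U ω) (V ω) ^ p ∂P[|J ⁻¹' {k}])]
  exact ENNReal.rpow_le_rpow (W_bind_le hp hU hV (hac.ae_le hU') (hac.ae_le hV')) (by linarith)

end Jensen


section LiftA
variable {A : Type*} [MetricSpace A] [SecondCountableTopology A] [MeasurableSpace A]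
  [BorelSpace A] [Nonempty A]
  {B : Type*} [MetricSpace B] [SecondCountableTopology B] [MeasurableSpace B]
  [BorelSpace B] [Nonempty B] {p : ℝ} {Ω : Type*} [MeasurableSpace Ω]

/-- membership in the lifted space -/
abbrev PLm (p : ℝ) (μ : Measure (A × Measure B)) : Prop :=
  MemPpLift p (edist : A → A → ℝ≥0∞) (edist : B → B → ℝ≥0∞) μ

theorem PL_ae {μ : Measure (A × Measure B)} (h : PLm p μ) : ∀ᵐ z ∂μ, z.2 ∈ Pp p := h.2.1

theorem PL_mom (hp : 1 ≤ p) {μ : Measure (A × Measure B)} (h : PLm p μ) :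
    ∫⁻ z, mom p z.2 ∂μ ≠ ∞ := by
  obtain ⟨h1, h2, z₀, h3, h4⟩ := h
  have hz0 := ((mem_Pp_iff hp z₀.2).1 h3).2
  have hb : ∀ z : A × Measure B, mom p z.2 ≤
      2 ^ (p - 1) * mom p z₀.2 + 2 ^ (p - 1) * liftDist p edist edist z₀ z ^ p := by
    intro z
    have hle := mom_le hp (TopologicalSpace.denseSeq B 0) z.2 z₀.2
    rw [← mul_add]
    calc mom p z.2 = (mom p z.2 ^ (1 / p)) ^ p := (rpow_p_inv hp _).symm
      _ ≤ (mom p z₀.2 ^ (1 / p) + W p z₀.2 z.2) ^ p := ENNReal.rpow_le_rpow hle (by linarith)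
      _ ≤ 2 ^ (p - 1) * ((mom p z₀.2 ^ (1 / p)) ^ p + W p z₀.2 z.2 ^ p) :=
        ENNReal.rpow_add_le_mul_rpow_add_rpow _ _ hp
      _ ≤ _ := by
        rw [rpow_p_inv hp, liftDist, rpow_p_inv hp]
        gcongr
        exact le_add_self
  have h2' : (2 : ℝ≥0∞) ^ (p - 1) ≠ ∞ := ENNReal.rpow_ne_top_of_nonneg (by linarith) (by simp)
  refine ne_top_of_le_ne_top ?_ (lintegral_mono hb)
  rw [lintegral_add_left measurable_const, lintegral_const, lintegral_const_mul' _ _ h2',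
    measure_univ, mul_one]
  exact ENNReal.add_ne_top.2 ⟨ENNReal.mul_ne_top h2' hz0, ENNReal.mul_ne_top h2' h4⟩

theorem bind_mem_Pp (hp : 1 ≤ p) {P : Measure Ω} [IsProbabilityMeasure P] {U : Ω → Measure B}
    (hU : Measurable U) (h : ∀ᵐ ω ∂P, U ω ∈ Pp p) (hm : ∫⁻ ω, mom p (U ω) ∂P ≠ ∞) :
    P.bind U ∈ Pp p := by
  rw [mem_Pp_iff hp]
  constructor
  · rw [Measure.bind_apply MeasurableSet.univ hU.aemeasurable]
    have : ∀ᵐ ω ∂P, U ω Set.univ = 1 := h.mono fun ω h => ((mem_Pp_iff hp _).1 h).1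
    rw [lintegral_congr_ae this]; simp
  · unfold mom
    rw [lintegral_bind' hU (by fun_prop)]
    exact hm

theorem cb_Pp (hp : 1 ≤ p) {P : Measure Ω} [IsProbabilityMeasure P] {U : Ω → Measure B}
    (hU : Measurable U) (h : ∀ᵐ ω ∂P, U ω ∈ Pp p) (hm : ∫⁻ ω, mom p (U ω) ∂P ≠ ∞)
    {J : Ω → ℕ} (hJ : Measurable J) (k : ℕ) : cb P J U k ∈ Pp p := by
  rw [mem_Pp_iff hp]
  have := cb_prob hJ hU (h.mono fun ω h => Pp_prob h) k
  refine ⟨measure_univ, ?_⟩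
  by_cases h0 : P (J ⁻¹' {k}) = 0
  · rw [cb, if_pos h0, mom, lintegral_dirac' _ (by fun_prop)]
    simp [ENNReal.zero_rpow_of_pos (by linarith : 0 < p)]
  · intro htop
    have h2 := cb_lintegral (P := P) hJ hU (f := fun x => edist (TopologicalSpace.denseSeq B 0) x ^ p)
      (by fun_prop) k
    change _ * mom p _ = ∫⁻ ω in _, mom p (U ω) ∂P at h2
    rw [htop, ENNReal.mul_top h0] at h2
    exact hm (top_le_iff.1 (h2 ▸ setLIntegral_le_lintegral _ _))

theorem CB_set {γ : Measure ((A × Measure B) × (A × Measure B))} {g : A × Measure B → Measure B}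
    (hg : Measurable g) (h : IsCondBar γ (fun z => g z.2)) {S : Set (A × Measure B)}
    (hS : MeasurableSet S) {f : B → ℝ≥0∞} (hf : Measurable f) :
    ∫⁻ z in {z | z.2 ∈ S}, ∫⁻ x, f x ∂(g z.2) ∂γ = ∫⁻ z in {z | z.2 ∈ S}, ∫⁻ x, f x ∂z.1.2 ∂γ := by
  have m1 : Measurable (fun z : (A × Measure B) × (A × Measure B) => g z.2) := hg.comp measurable_snd
  have m2 : Measurable (fun z : (A × Measure B) × (A × Measure B) => z.1.2) :=
    measurable_snd.comp measurable_fst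
  rw [← lintegral_bind' m1 hf, ← lintegral_bind' m2 hf]
  congr 1
  ext E hE
  rw [Measure.bind_apply hE m1.aemeasurable, Measure.bind_apply hE m2.aemeasurable]
  exact h.2.2 S hS E hE

theorem CB {γ : Measure ((A × Measure B) × (A × Measure B))} {g : A × Measure B → Measure B}
    (hg : Measurable g) (h : IsCondBar γ (fun z => g z.2)) {φ : A × Measure B → ℝ≥0∞}
    (hφ : Measurable φ) {f : B → ℝ≥0∞} (hf : Measurable f) :
    ∫⁻ z, φ z.2 * ∫⁻ x, f x ∂(g z.2) ∂γ = ∫⁻ z, φ z.2 * ∫⁻ x, f x ∂z.1.2 ∂γ := by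
  have m1 : Measurable (fun z : (A × Measure B) × (A × Measure B) => ∫⁻ x, f x ∂(g z.2)) :=
    (Measure.measurable_lintegral hf).comp (hg.comp measurable_snd)
  have m2 : Measurable (fun z : (A × Measure B) × (A × Measure B) => ∫⁻ x, f x ∂z.1.2) :=
    (Measure.measurable_lintegral hf).comp (measurable_snd.comp measurable_fst)
  have hh : (γ.withDensity (fun z => ∫⁻ x, f x ∂(g z.2))).map Prod.snd =
      (γ.withDensity (fun z => ∫⁻ x, f x ∂z.1.2)).map Prod.snd := by
    ext S hS
    rw [Measure.map_apply measurable_snd hS, Measure.map_apply measurable_snd hS,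
      withDensity_apply _ (measurable_snd hS), withDensity_apply _ (measurable_snd hS)]
    exact CB_set hg h hS hf
  have h3 := congrArg (fun m => ∫⁻ z, φ z ∂m) hh
  have hφ2 : Measurable (fun z : (A × Measure B) × (A × Measure B) => φ z.2) := hφ.comp measurable_snd
  rw [lintegral_map hφ measurable_snd, lintegral_map hφ measurable_snd,
    lintegral_withDensity_eq_lintegral_mul _ m1 hφ2,
    lintegral_withDensity_eq_lintegral_mul _ m2 hφ2] at h3
  simp only [Pi.mul_apply, Function.comp_apply] at h3
  simpa only [mul_comm] using h3

theorem CB1 {γ : Measure ((A × Measure B) × (A × Measure B))} {g : A × Measure B → Measure B}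
    (hg : Measurable g) (h : IsCondBar γ (fun z => g z.2)) {f : B → ℝ≥0∞} (hf : Measurable f) :
    ∫⁻ z, ∫⁻ x, f x ∂(g z.2) ∂γ = ∫⁻ z, ∫⁻ x, f x ∂z.1.2 ∂γ := by
  simpa using CB hg h (φ := fun _ => 1) measurable_const hf

theorem CB_mom (hp : 1 ≤ p) {μ ν : Measure (A × Measure B)} (hμ : PLm p μ)
    {γ : Measure ((A × Measure B) × (A × Measure B))} (hγ : γ ∈ Cpl μ ν) {g : A × Measure B → Measure B}
    (hg : Measurable g) (h : IsCondBar γ (fun z => g z.2)) : ∫⁻ z, mom p (g z.2) ∂γ ≠ ∞ := by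
  have := CB1 hg h (f := fun x => edist (TopologicalSpace.denseSeq B 0) x ^ p) (by fun_prop)
  change ∫⁻ z, mom p (g z.2) ∂γ = ∫⁻ z, mom p z.1.2 ∂γ at this
  rw [this]
  have h2 := PL_mom hp hμ
  rw [← hγ.1, lintegral_map (f := fun z : A × Measure B => mom p z.2)
    (measurable_mom.comp measurable_snd) measurable_fst] at h2
  exact h2

theorem CB_Pp (hp : 1 ≤ p) {μ ν : Measure (A × Measure B)} (hμ : PLm p μ)
    {γ : Measure ((A × Measure B) × (A × Measure B))} (hγ : γ ∈ Cpl μ ν) {g : A × Measure B → Measure B}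
    (hg : Measurable g) (h : IsCondBar γ (fun z => g z.2)) : ∀ᵐ z ∂γ, g z.2 ∈ Pp p := by
  have := ae_lt_top (measurable_mom.comp (hg.comp measurable_snd)) (CB_mom hp hμ hγ hg h)
  filter_upwards [this] with z hz
  have := h.2.1 z
  exact (mem_Pp_iff hp _).2 ⟨measure_univ, hz.ne⟩

theorem exists_zcell (A : Type*) [MetricSpace A] [SecondCountableTopology A] [MeasurableSpace A]
    [BorelSpace A] [Nonempty A]
    (B : Type*) [MetricSpace B] [SecondCountableTopology B] [MeasurableSpace B]
    [BorelSpace B] [Nonempty B] (hp : 1 ≤ p) {ε : ℝ≥0∞} (hε : 0 < ε) (hε' : ε ≠ ∞) :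
    ∃ (j : A × Measure B → ℕ) (C : ℕ → Set (Measure B)), Measurable j ∧
      (∀ z z', j z = j z' → edist z.1 z'.1 ≤ ε) ∧ (∀ z, z.2 ∈ Pp p → z.2 ∈ C (j z)) ∧
      (∀ q, C q ⊆ Pp p) ∧ (∀ q, ∀ m ∈ C q, ∀ n ∈ C q, W p m n ≤ ε) ∧
      (∀ q, ∀ Q : Measure (Measure B), IsProbabilityMeasure Q → (∀ᵐ m ∂Q, m ∈ C q) → Q.join ∈ C q) ∧
      ∀ q, MeasurableSet (C q) := by
  obtain ⟨t, ht, h⟩ := exists_bcell (B := A) (ε / 2) (ENNReal.half_pos hε.ne')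
  obtain ⟨C, i, hi, h1, h2, h3, h4, h5⟩ := exists_cells (B := B) hp hε hε'
  refine ⟨fun z => Nat.pair (t z.1) (i z.2), fun k => C k.unpair.2,
    measurable_label2 Nat.pair (ht.comp measurable_fst) (hi.comp measurable_snd), ?_, ?_,
    fun q => h1 _, fun q => h3 _, fun q => h4 _, fun q => h5 _⟩
  · intro z z' hz
    obtain ⟨e1, e2⟩ := Nat.pair_eq_pair.1 hz
    calc edist z.1 z'.1 ≤ _ := edist_triangle_right _ _ (TopologicalSpace.denseSeq A (t z.1))
      _ ≤ ε / 2 + ε / 2 := add_le_add (h _) (e1 ▸ h _)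
      _ = ε := ENNReal.add_halves ε
  · intro z hz
    simpa using h2 _ hz

theorem CW_le {μ ν : Measure (A × Measure B)} {γ : Measure ((A × Measure B) × (A × Measure B))}
    (hγ : γ ∈ Cpl μ ν) {η : (A × Measure B) × (A × Measure B) → Measure B} (h : IsCondBar γ η) :
    CWbar p edist edist μ ν ≤ nrm2 p γ (fun z => edist z.1.1 z.2.1) (fun z => W p (η z) z.2.2) :=
  (iInf₂_le γ hγ).trans (iInf₂_le η h)

theorem lemS (hp : 1 ≤ p) {a b : Measure (A × Measure B)} (ha : PLm p a) (hb : PLm p b)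
    {P : Measure Ω} [IsProbabilityMeasure P] {L M : Ω → A × Measure B} (hL : Measurable L)
    (hM : Measurable M) (hLa : P.map L = a) (hMb : P.map M = b)
    {ε : ℝ≥0∞} {j : A × Measure B → ℕ} (hj : Measurable j)
    (h1 : ∀ z z', j z = j z' → edist z.1 z'.1 ≤ ε)
    (h2 : ∀ z z', z.2 ∈ Pp p → z'.2 ∈ Pp p → j z = j z' → W p z.2 z'.2 ≤ ε) :
    CWbar p edist edist a b ≤
      nrm2 p P (fun ω => edist (L ω).1 (M ω).1)
        (fun ω => W p (cb P (fun ω => j (M ω)) (fun ω => (L ω).2) (j (M ω))) (M ω).2) + 2 * ε := by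
  classical
  have := hb.1
  set J : Ω → ℕ := fun ω => j (M ω) with hJdef
  have hJ : Measurable J := hj.comp hM
  have hU : Measurable (fun ω => (L ω).2) := measurable_snd.comp hL
  set V : ℕ → Measure B := cb P J (fun ω => (L ω).2) with hV
  have hlab : b.map j = P.map J := by rw [← hMb, Measure.map_map hj hM]; rfl
  have hLP : ∀ᵐ ω ∂P, (L ω).2 ∈ Pp p := by
    have := PL_ae ha
    rw [← hLa] at this
    exact ae_of_ae_map hL.aemeasurable this
  have hbP := PL_ae hb
  have hMP : ∀ᵐ ω ∂P, (M ω).2 ∈ Pp p := by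
    rw [← hMb] at hbP
    exact ae_of_ae_map hM.aemeasurable hbP
  have hLm : ∫⁻ ω, mom p (L ω).2 ∂P ≠ ∞ := by
    have := PL_mom hp ha
    rwa [← hLa, lintegral_map (f := fun z : A × Measure B => mom p z.2)
      (measurable_mom.comp measurable_snd) hL] at this
  have hVP : ∀ k, V k ∈ Pp p := cb_Pp hp hU hLP hLm hJ
  have hVm : Measurable (fun z => V (j z)) := (measurable_from_top (f := V)).comp hj
  set Γ := glue b P j hj J with hΓ
  have hΓp : IsProbabilityMeasure Γ := glue_prob hj hJ hlab
  have hΓ1 : Γ.map Prod.fst = b := glue_fst hj hJ hlab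
  have hΓ2 : Γ.map Prod.snd = P := glue_snd hj hJ hlab
  let T : (A × Measure B) × Ω → (A × Measure B) × (A × Measure B) := fun w => (L w.2, w.1)
  have hT : Measurable T := (hL.comp measurable_snd).prodMk measurable_fst
  have hC : Γ.map T ∈ Cpl a b := by
    constructor
    · rw [Measure.map_map measurable_fst hT]
      change Γ.map (L ∘ Prod.snd) = a
      rw [← Measure.map_map hL measurable_snd, hΓ2, hLa]
    · rw [Measure.map_map measurable_snd hT]
      exact hΓ1
  have hB : IsCondBar (Γ.map T) (fun z => V (j z.2)) := by
    refine ⟨⟨fun z => V (j z), hVm, fun z => rfl⟩, fun z => Pp_prob (hVP _), ?_⟩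
    intro S hS E hE
    have hS' : MeasurableSet {z : (A × Measure B) × (A × Measure B) | z.2 ∈ S} := measurable_snd hS
    have me := Measure.measurable_coe hE
    rw [← lintegral_indicator hS', ← lintegral_indicator hS', lintegral_map _ hT, lintegral_map _ hT]
    rotate_left
    · exact (me.comp (measurable_snd.comp measurable_fst)).indicator hS'
    · exact (me.comp (hVm.comp measurable_snd)).indicator hS'
    have e1 : ∀ w, ({z : (A × Measure B) × (A × Measure B) | z.2 ∈ S}.indicator
        (fun z => V (j z.2) E) (T w)) = S.indicator (fun z => V (j z) E) w.1 := fun w => rfl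
    have e2 : ∀ w, ({z : (A × Measure B) × (A × Measure B) | z.2 ∈ S}.indicator
        (fun z => z.1.2 E) (T w)) = S.indicator (fun _ => 1) w.1 * (L w.2).2 E := fun w => by
      by_cases h : w.1 ∈ S <;> simp [Set.indicator, T, h]
    simp only [e1, e2]
    rw [hΓ, lintegral_glue hj, lintegral_glue hj]
    rotate_left
    · exact ((measurable_const.indicator hS).comp measurable_fst).mul
        (me.comp (hU.comp measurable_snd))
    · exact ((me.comp hVm).indicator hS).comp measurable_fst
    refine lintegral_congr_ae ?_
    filter_upwards [ae_label_pos (P := b) hj] with x hx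
    rw [label_eq hj hJ hlab] at hx
    have := ProbabilityTheory.cond_isProbabilityMeasure hx
    simp only [lintegral_const, measure_univ, mul_one]
    rw [lintegral_const_mul (f := fun ω => (L ω).2 E) _ (me.comp hU), Set.indicator_apply, Set.indicator_apply,
      hV, cb, if_neg hx]
    split_ifs
    · rw [one_mul, Measure.bind_apply hE hU.aemeasurable]
    · simp
  refine (CW_le hC hB).trans ?_
  have mW : AEMeasurable (fun z => W p (V (j z)) z.2) b :=
    (measOn_W hp).aemeasurable hVm.aemeasurable measurable_snd.aemeasurable
      (.of_forall fun z => hVP _) hbP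
  have mWM : AEMeasurable (fun ω => W p (V (J ω)) (M ω).2) P :=
    (measOn_W hp).aemeasurable (hVm.comp hM).aemeasurable (measurable_snd.comp hM).aemeasurable
      (.of_forall fun z => hVP _) hMP
  have mE : Measurable (fun ω => edist (L ω).1 (M ω).1) :=
    (measurable_fst.comp hL).edist (measurable_fst.comp hM)
  rw [nrm2_map hT (by fun_prop)]
  swap
  · have : AEMeasurable (fun z => W p (V (j z)) z.2) ((Γ.map T).map Prod.snd) := by
      rw [hC.2]; exact mW
    exact this.comp_measurable measurable_snd
  have hb1 : ∀ᵐ w ∂Γ, w.1.2 ∈ Pp p := by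
    rw [← hΓ1] at hbP
    exact ae_of_ae_map measurable_fst.aemeasurable hbP
  have hb2 : ∀ᵐ w ∂Γ, (M w.2).2 ∈ Pp p := by
    rw [← hΓ2] at hMP
    exact ae_of_ae_map measurable_snd.aemeasurable hMP
  have mWΓ : AEMeasurable (fun w : (A × Measure B) × Ω => W p (V (J w.2)) (M w.2).2) Γ := by
    rw [← hΓ2] at mWM
    exact mWM.comp_measurable measurable_snd
  calc nrm2 p Γ (fun w => edist (T w).1.1 (T w).2.1) (fun w => W p (V (j (T w).2)) (T w).2.2)
      ≤ nrm2 p Γ (fun w => edist (L w.2).1 (M w.2).1 + ε) (fun w => W p (V (J w.2)) (M w.2).2 + ε) := by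
        refine nrm2_mono hp ?_ ?_
        · filter_upwards [glue_label (P := b) (Q := P) hj hJ] with w hw
          refine (edist_triangle _ (M w.2).1 _).trans ?_
          gcongr
          exact h1 _ _ hw.symm
        · filter_upwards [glue_label (P := b) (Q := P) hj hJ, hb1, hb2] with w hw x y
          have := Pp_prob (hVP (J w.2))
          have := Pp_prob x
          have := Pp_prob y
          change W p (V (j w.1)) w.1.2 ≤ _
          rw [hw]
          refine (W_triangle hp _ (M w.2).2 _).trans ?_
          gcongr
          exact h2 _ _ y x hw.symm
    _ ≤ nrm2 p Γ (fun w => edist (L w.2).1 (M w.2).1) (fun w => W p (V (J w.2)) (M w.2).2) +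
        nrm2 p Γ (fun _ => ε) (fun _ => ε) :=
        nrm2_add_le hp (mE.comp measurable_snd).aemeasurable mWΓ aemeasurable_const aemeasurable_const
    _ ≤ _ := by
        gcongr
        · rw [← hΓ2] at mWM
          conv_rhs => rw [← hΓ2]
          rw [nrm2_map measurable_snd mE.aemeasurable mWM]
        · exact (nrm2_const_le hp _ _).trans (two_mul ε).ge

end LiftA


section LiftB
variable {A : Type*} [MetricSpace A] [SecondCountableTopology A] [MeasurableSpace A]
  [BorelSpace A] [Nonempty A]
  {B : Type*} [MetricSpace B] [SecondCountableTopology B] [MeasurableSpace B]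
  [BorelSpace B] [Nonempty B] {p : ℝ} {Ω : Type*} [MeasurableSpace Ω]

theorem nrm2_le_of (hp : 1 ≤ p) {P : Measure Ω} {e w w' : Ω → ℝ≥0∞} (he : Measurable e)
    (h : ∫⁻ ω, w ω ^ p ∂P ≤ ∫⁻ ω, w' ω ^ p ∂P) : nrm2 p P e w ≤ nrm2 p P e w' := by
  unfold nrm2
  rw [lintegral_add_left (he.pow_const p), lintegral_add_left (he.pow_const p)]
  gcongr

theorem nrm2_add_const (hp : 1 ≤ p) {P : Measure Ω} [IsProbabilityMeasure P] {e w : Ω → ℝ≥0∞}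
    (he : AEMeasurable e P) (hw : AEMeasurable w P) (a b : ℝ≥0∞) :
    nrm2 p P (fun ω => e ω + a) (fun ω => w ω + b) ≤ nrm2 p P e w + (a + b) := by
  refine (nrm2_add_le hp he hw aemeasurable_const aemeasurable_const).trans ?_
  gcongr
  exact nrm2_const_le hp _ _

theorem cb_congr {P : Measure Ω} [IsProbabilityMeasure P] {J : Ω → ℕ} (hJ : Measurable J)
    {U V : Ω → Measure B} (hU : Measurable U) (hV : Measurable V) (k : ℕ)
    (h : ∀ E, MeasurableSet E → ∫⁻ ω in J ⁻¹' {k}, U ω E ∂P = ∫⁻ ω in J ⁻¹' {k}, V ω E ∂P) :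
    cb P J U k = cb P J V k := by
  unfold cb
  split_ifs with h0
  · rfl
  · ext E hE
    rw [Measure.bind_apply hE hU.aemeasurable, Measure.bind_apply hE hV.aemeasurable]
    have := h E hE
    rw [← lintegral_cond hJ, ← lintegral_cond hJ] at this
    exact (ENNReal.mul_right_inj h0 (measure_ne_top _ _)).1 this

theorem lift_rpow (hp : 1 ≤ p) (z z' : A × Measure B) :
    liftDist p edist edist z z' ^ p = edist z.1 z'.1 ^ p + W p z.2 z'.2 ^ p := rpow_p_inv hp _

theorem CW_le_AW (hp : 1 ≤ p) {a b : Measure (A × Measure B)} (ha : PLm p a) (hb : PLm p b) :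
    CWbar p edist edist a b ≤ AWbar p edist edist a b := by
  have := ha.1
  refine le_iInf₂ fun γ hγ => ?_
  have := Cpl_prob hγ
  simp only [lift_rpow hp]
  change _ ≤ nrm2 p γ (fun z => edist z.1.1 z.2.1) (fun z => W p z.1.2 z.2.2)
  refine le_of_forall_eps 3 fun ε hε hε' => ?_
  obtain ⟨j, C, hj, h1, h2, h3, h4, h5, h6⟩ := exists_zcell A B hp hε hε'
  have hX := Cpl_ae_fst hγ (PL_ae ha)
  have hY := Cpl_ae_snd hγ (PL_ae hb)
  let J : (A × Measure B) × (A × Measure B) → ℕ := fun z => j z.2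
  have hJ : Measurable J := hj.comp measurable_snd
  let U : (A × Measure B) × (A × Measure B) → Measure B := fun z => z.1.2
  let V : (A × Measure B) × (A × Measure B) → Measure B := fun z => z.2.2
  have hU : Measurable U := measurable_snd.comp measurable_fst
  have hV : Measurable V := measurable_snd.comp measurable_snd
  refine (lemS hp ha hb (P := γ) measurable_fst measurable_snd hγ.1 hγ.2 hj h1
    (fun z z' hz hz' he => h4 _ _ (h2 z hz) _ (he ▸ h2 z' hz'))).trans ?_
  have hcY : ∀ᵐ z ∂γ, cb γ J V (J z) ∈ C (J z) := by
    refine cb_mem' hJ hV h5 h6 ?_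
    filter_upwards [hY] with z hz using h2 _ hz
  have pX := cb_prob (P := γ) hJ hU (hX.mono fun z h => Pp_prob h)
  have pY := cb_prob (P := γ) hJ hV (hY.mono fun z h => Pp_prob h)
  have me : Measurable (fun z : (A × Measure B) × (A × Measure B) => edist z.1.1 z.2.1) := by fun_prop
  have mw : Measurable (fun z => W p (cb γ J U (J z)) (cb γ J V (J z))) :=
    (measurable_from_top (f := fun k => W p (cb γ J U k) (cb γ J V k))).comp hJ
  calc _ ≤ nrm2 p γ (fun z => edist z.1.1 z.2.1 + 0)
        (fun z => W p (cb γ J U (J z)) (cb γ J V (J z)) + ε) + 2 * ε := by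
        gcongr
        refine nrm2_mono hp (by simp) ?_
        filter_upwards [hcY, hY] with z hz hz2
        have := Pp_prob hz2
        refine (W_triangle hp _ (cb γ J V (J z)) _).trans ?_
        gcongr
        exact h4 _ _ hz _ (h2 _ hz2)
    _ ≤ nrm2 p γ (fun z => edist z.1.1 z.2.1) (fun z => W p (cb γ J U (J z)) (cb γ J V (J z))) +
          (0 + ε) + 2 * ε := by
        gcongr
        exact nrm2_add_const hp me.aemeasurable mw.aemeasurable _ _
    _ ≤ nrm2 p γ (fun z => edist z.1.1 z.2.1) (fun z => W p z.1.2 z.2.2) + (0 + ε) + 2 * ε := by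
        gcongr
        exact nrm2_le_of hp me (W_cb_le hp hU hV hX hY hJ)
    _ = _ := by push_cast; ring

theorem CW_tri_aux (hp : 1 ≤ p) {a b c : Measure (A × Measure B)} (ha : PLm p a) (hb : PLm p b)
    (hc : PLm p c) {γ θ : Measure ((A × Measure B) × (A × Measure B))} (hγ : γ ∈ Cpl a b)
    (hθ : θ ∈ Cpl b c) {g h : A × Measure B → Measure B} (hg : Measurable g) (hh : Measurable h)
    (hγg : IsCondBar γ (fun z => g z.2)) (hθh : IsCondBar θ (fun z => h z.2)) :
    CWbar p edist edist a c ≤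
      nrm2 p γ (fun z => edist z.1.1 z.2.1) (fun z => W p (g z.2) z.2.2) +
      nrm2 p θ (fun z => edist z.1.1 z.2.1) (fun z => W p (h z.2) z.2.2) := by
  have := ha.1
  have := hb.1
  have := Cpl_prob hγ
  have := Cpl_prob hθ
  refine le_of_forall_eps 6 fun ε hε hε' => ?_
  obtain ⟨j, C, hj, h1, h2, h3, h4, h5, h6⟩ := exists_zcell A B hp hε hε'
  have h2' : ∀ z z' : A × Measure B, z.2 ∈ Pp p → z'.2 ∈ Pp p → j z = j z' → W p z.2 z'.2 ≤ ε :=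
    fun z z' hz hz' he => h4 _ _ (h2 z hz) _ (he ▸ h2 z' hz')
  let i₁ : (A × Measure B) × (A × Measure B) → ℕ := fun z => j z.2
  let i₂ : (A × Measure B) × (A × Measure B) → ℕ := fun z => j z.1
  have hi₁ : Measurable i₁ := hj.comp measurable_snd
  have hi₂ : Measurable i₂ := hj.comp measurable_fst
  have hlab : γ.map i₁ = θ.map i₂ := by
    have e1 : γ.map i₁ = b.map j := by rw [← hγ.2, Measure.map_map hj measurable_snd]; rfl
    have e2 : θ.map i₂ = b.map j := by rw [← hθ.1, Measure.map_map hj measurable_fst]; rfl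
    rw [e1, e2]
  set P := glue γ θ i₁ hi₁ i₂ with hP
  have hPp : IsProbabilityMeasure P := glue_prob hi₁ hi₂ hlab
  have hP1 : P.map Prod.fst = γ := glue_fst hi₁ hi₂ hlab
  have hP2 : P.map Prod.snd = θ := glue_snd hi₁ hi₂ hlab
  have hPl : ∀ᵐ w ∂P, j w.1.2 = j w.2.1 := glue_label hi₁ hi₂
  have ae1 : ∀ {q : (A × Measure B) × (A × Measure B) → Prop}, (∀ᵐ z ∂γ, q z) → ∀ᵐ w ∂P, q w.1 := by
    intro q hq
    rw [← hP1] at hq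
    exact ae_of_ae_map measurable_fst.aemeasurable hq
  have ae2 : ∀ {q : (A × Measure B) × (A × Measure B) → Prop}, (∀ᵐ z ∂θ, q z) → ∀ᵐ w ∂P, q w.2 := by
    intro q hq
    rw [← hP2] at hq
    exact ae_of_ae_map measurable_snd.aemeasurable hq
  have kX := ae1 (Cpl_ae_fst hγ (PL_ae ha))
  have kY := ae1 (Cpl_ae_snd hγ (PL_ae hb))
  have kY' := ae2 (Cpl_ae_fst hθ (PL_ae hb))
  have kZ := ae2 (Cpl_ae_snd hθ (PL_ae hc))
  have kg := ae1 (CB_Pp hp ha hγ hg hγg)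
  have kh := ae2 (CB_Pp hp hb hθ hh hθh)
  let Ω₀ := ((A × Measure B) × (A × Measure B)) × ((A × Measure B) × (A × Measure B))
  let J : Ω₀ → ℕ := fun w => j w.2.2
  have hJ : Measurable J := hj.comp (measurable_snd.comp measurable_snd)
  let UX : Ω₀ → Measure B := fun w => w.1.1.2
  let UY : Ω₀ → Measure B := fun w => w.2.1.2
  let UZ : Ω₀ → Measure B := fun w => w.2.2.2
  let Ug : Ω₀ → Measure B := fun w => g w.1.2
  let Uh : Ω₀ → Measure B := fun w => h w.2.2
  have mX : Measurable UX := measurable_snd.comp (measurable_fst.comp measurable_fst)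
  have mY : Measurable UY := measurable_snd.comp (measurable_fst.comp measurable_snd)
  have mZ : Measurable UZ := measurable_snd.comp (measurable_snd.comp measurable_snd)
  have mg : Measurable Ug := hg.comp (measurable_snd.comp measurable_fst)
  have mh : Measurable Uh := hh.comp (measurable_snd.comp measurable_snd)
  have hL : P.map (fun w : Ω₀ => w.1.1) = a := by
    rw [← hγ.1, ← hP1, Measure.map_map measurable_fst measurable_fst]; rfl
  have hM : P.map (fun w : Ω₀ => w.2.2) = c := by
    rw [← hθ.2, ← hP2, Measure.map_map measurable_snd measurable_snd]; rfl
  have c1 : ∀ k, cb P J UX k = cb P J Ug k := by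
    intro k
    have hk : MeasurableSet (J ⁻¹' {k}) := hJ (by measurability)
    refine cb_congr hJ mX mg k fun E hE => ?_
    have me := Measure.measurable_coe hE
    rw [← lintegral_indicator hk, ← lintegral_indicator hk, hP, lintegral_glue hi₁, lintegral_glue hi₁]
    rotate_left
    · exact (me.comp mg).indicator hk
    · exact (me.comp mX).indicator hk
    have hS : MeasurableSet {z : (A × Measure B) × (A × Measure B) | j z.2 = k} :=
      (hj.comp measurable_snd) (by measurability : MeasurableSet ({k} : Set ℕ))
    have e : ∀ (ω : (A × Measure B) × (A × Measure B)) (F : Measure B),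
        ∫⁻ ω', (J ⁻¹' {k}).indicator (fun _ => F E) (ω, ω') ∂θ[|i₂ ⁻¹' {i₁ ω}] =
        θ[|i₂ ⁻¹' {j ω.2}] {z | j z.2 = k} * ∫⁻ x, E.indicator 1 x ∂F := by
      intro ω F
      rw [lintegral_indicator_one hE, mul_comm, ← lintegral_indicator_const hS]
      rfl
    have hφ : Measurable (fun y : A × Measure B => θ[|i₂ ⁻¹' {j y}] {z | j z.2 = k}) :=
      (measurable_from_top (f := fun l : ℕ => θ[|i₂ ⁻¹' {l}] {z | j z.2 = k})).comp hj
    have := CB hg hγg hφ (f := E.indicator 1) (measurable_one.indicator hE)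
    refine Eq.trans ?_ (this.symm.trans ?_)
    · exact lintegral_congr fun ω => e ω ω.1.2
    · exact lintegral_congr fun ω => (e ω (g ω.2)).symm
  have c2 : ∀ k, cb P J UY k = cb P J Uh k := by
    intro k
    have hk : MeasurableSet (J ⁻¹' {k}) := hJ (by measurability)
    refine cb_congr hJ mY mh k fun E hE => ?_
    have me := Measure.measurable_coe hE
    have hS : MeasurableSet (j ⁻¹' {k}) := hj (by measurability)
    have hS2 : MeasurableSet {z : (A × Measure B) × (A × Measure B) | z.2 ∈ j ⁻¹' {k}} :=
      measurable_snd hS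
    have := hθh.2.2 _ hS E hE
    rw [← hP2, ← lintegral_indicator hS2, ← lintegral_indicator hS2,
      lintegral_map _ measurable_snd, lintegral_map _ measurable_snd] at this
    rotate_left
    · exact (me.comp (measurable_snd.comp measurable_fst)).indicator hS2
    · exact (me.comp (hh.comp measurable_snd)).indicator hS2
    rw [← lintegral_indicator hk, ← lintegral_indicator hk]
    exact this.symm
  have pg := cb_prob (P := P) hJ mg (kg.mono fun z h => Pp_prob h)
  have pY := cb_prob (P := P) hJ mY (kY'.mono fun z h => Pp_prob h)
  have pZ := cb_prob (P := P) hJ mZ (kZ.mono fun z h => Pp_prob h)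
  have hcZ : ∀ᵐ w ∂P, cb P J UZ (J w) ∈ C (J w) := by
    refine cb_mem' hJ mZ h5 h6 ?_
    filter_upwards [kZ] with z hz using h2 _ hz
  refine (lemS hp ha hc (P := P) (L := fun w : Ω₀ => w.1.1) (M := fun w : Ω₀ => w.2.2)
    (by fun_prop) (by fun_prop) hL hM hj h1 h2').trans ?_
  change nrm2 p P (fun w : Ω₀ => edist w.1.1.1 w.2.2.1) (fun w => W p (cb P J UX (J w)) (UZ w)) + _ ≤ _
  have me1 : Measurable (fun w : Ω₀ => edist w.1.1.1 w.1.2.1) := by fun_prop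
  have me2 : Measurable (fun w : Ω₀ => edist w.2.1.1 w.2.2.1) := by fun_prop
  have mw1 : Measurable (fun w => W p (cb P J Ug (J w)) (cb P J UY (J w))) :=
    (measurable_from_top (f := fun k => W p (cb P J Ug k) (cb P J UY k))).comp hJ
  have mw2 : Measurable (fun w => W p (cb P J Uh (J w)) (cb P J UZ (J w))) :=
    (measurable_from_top (f := fun k => W p (cb P J Uh k) (cb P J UZ k))).comp hJ
  have mgY : AEMeasurable (fun z => W p (g z.2) z.2.2) γ :=
    (measOn_W hp).aemeasurable (hg.comp measurable_snd).aemeasurable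
      (measurable_snd.comp measurable_snd).aemeasurable (CB_Pp hp ha hγ hg hγg)
      (Cpl_ae_snd hγ (PL_ae hb))
  have mhZ : AEMeasurable (fun z => W p (h z.2) z.2.2) θ :=
    (measOn_W hp).aemeasurable (hh.comp measurable_snd).aemeasurable
      (measurable_snd.comp measurable_snd).aemeasurable (CB_Pp hp hb hθ hh hθh)
      (Cpl_ae_snd hθ (PL_ae hc))
  have mgY' : AEMeasurable (fun w : Ω₀ => W p (g w.1.2) w.1.2.2) P := by
    rw [← hP1] at mgY
    exact mgY.comp_measurable measurable_fst
  have s1 : nrm2 p P (fun w : Ω₀ => edist w.1.1.1 w.1.2.1)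
      (fun w => W p (cb P J Ug (J w)) (cb P J UY (J w))) ≤
      nrm2 p γ (fun z => edist z.1.1 z.2.1) (fun z => W p (g z.2) z.2.2) + ε := by
    calc _ ≤ nrm2 p P (fun w : Ω₀ => edist w.1.1.1 w.1.2.1) (fun w => W p (Ug w) (UY w)) :=
          nrm2_le_of hp me1 (W_cb_le hp mg mY kg kY' hJ)
      _ ≤ nrm2 p P (fun w : Ω₀ => edist w.1.1.1 w.1.2.1 + 0) (fun w => W p (g w.1.2) w.1.2.2 + ε) := by
          refine nrm2_mono hp (by simp) ?_
          filter_upwards [kg, kY, kY', hPl] with w x y z hw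
          have := Pp_prob x
          have := Pp_prob y
          have := Pp_prob z
          refine (W_triangle hp _ w.1.2.2 _).trans ?_
          gcongr
          exact h2' _ _ y z hw
      _ ≤ nrm2 p P (fun w : Ω₀ => edist w.1.1.1 w.1.2.1) (fun w => W p (g w.1.2) w.1.2.2) + (0 + ε) :=
          nrm2_add_const hp me1.aemeasurable mgY' _ _
      _ = _ := by
          rw [zero_add]
          congr 1
          rw [← hP1] at mgY
          conv_rhs => rw [← hP1]
          rw [nrm2_map measurable_fst (by fun_prop) mgY]
  have s2 : nrm2 p P (fun w : Ω₀ => edist w.2.1.1 w.2.2.1)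
      (fun w => W p (cb P J Uh (J w)) (cb P J UZ (J w))) ≤
      nrm2 p θ (fun z => edist z.1.1 z.2.1) (fun z => W p (h z.2) z.2.2) := by
    calc _ ≤ nrm2 p P (fun w : Ω₀ => edist w.2.1.1 w.2.2.1) (fun w => W p (Uh w) (UZ w)) :=
          nrm2_le_of hp me2 (W_cb_le hp mh mZ kh kZ hJ)
      _ = _ := by
          rw [← hP2] at mhZ
          conv_rhs => rw [← hP2]
          rw [nrm2_map measurable_snd (by fun_prop) mhZ]
  calc _ ≤ nrm2 p P (fun w : Ω₀ => edist w.1.1.1 w.1.2.1 + (edist w.2.1.1 w.2.2.1 + ε))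
        (fun w => W p (cb P J Ug (J w)) (cb P J UY (J w)) +
          (W p (cb P J Uh (J w)) (cb P J UZ (J w)) + ε)) + 2 * ε := by
        gcongr
        refine nrm2_mono hp ?_ ?_
        · filter_upwards [hPl] with w hw
          calc edist w.1.1.1 w.2.2.1 ≤ edist w.1.1.1 w.1.2.1 + edist w.1.2.1 w.2.1.1
                + edist w.2.1.1 w.2.2.1 := edist_triangle4 _ _ _ _
            _ ≤ edist w.1.1.1 w.1.2.1 + ε + edist w.2.1.1 w.2.2.1 := by gcongr; exact h1 _ _ hw
            _ = _ := by ring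
        · filter_upwards [hcZ, kZ] with w x y
          have : IsProbabilityMeasure (UZ w) := Pp_prob y
          rw [c1]
          refine (W_triangle hp _ (cb P J UY (J w)) _).trans ?_
          gcongr
          refine (W_triangle hp _ (cb P J UZ (J w)) _).trans ?_
          rw [c2]
          gcongr
          exact h4 _ _ x _ (h2 _ y)
    _ ≤ nrm2 p P (fun w : Ω₀ => edist w.1.1.1 w.1.2.1)
          (fun w => W p (cb P J Ug (J w)) (cb P J UY (J w))) +
        (nrm2 p P (fun w : Ω₀ => edist w.2.1.1 w.2.2.1)
          (fun w => W p (cb P J Uh (J w)) (cb P J UZ (J w))) + (ε + ε)) + 2 * ε := by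
        gcongr
        refine (nrm2_add_le hp me1.aemeasurable mw1.aemeasurable (me2.add_const _).aemeasurable
          (mw2.add_const _).aemeasurable).trans ?_
        gcongr
        exact nrm2_add_const hp me2.aemeasurable mw2.aemeasurable _ _
    _ ≤ (nrm2 p γ (fun z => edist z.1.1 z.2.1) (fun z => W p (g z.2) z.2.2) + ε) +
        (nrm2 p θ (fun z => edist z.1.1 z.2.1) (fun z => W p (h z.2) z.2.2) + (ε + ε)) + 2 * ε := by
        gcongr
    _ = nrm2 p γ (fun z => edist z.1.1 z.2.1) (fun z => W p (g z.2) z.2.2) +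
        nrm2 p θ (fun z => edist z.1.1 z.2.1) (fun z => W p (h z.2) z.2.2) + 5 * ε := by ring
    _ ≤ _ := by
        gcongr
        norm_num

theorem CW_lt_iff {a b : Measure (A × Measure B)} {r : ℝ≥0∞} (h : CWbar p edist edist a b < r) :
    ∃ γ ∈ Cpl a b, ∃ g : A × Measure B → Measure B, Measurable g ∧ IsCondBar γ (fun z => g z.2) ∧
      nrm2 p γ (fun z => edist z.1.1 z.2.1) (fun z => W p (g z.2) z.2.2) < r := by
  unfold CWbar at h
  simp only [iInf_lt_iff] at h
  obtain ⟨γ, hγ, η, hη, h⟩ := h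
  obtain ⟨g, hg, he⟩ := hη.1
  have : η = fun z => g z.2 := funext he
  subst this
  exact ⟨γ, hγ, g, hg, hη, h⟩

theorem CW_triangle (hp : 1 ≤ p) {a b c : Measure (A × Measure B)} (ha : PLm p a) (hb : PLm p b)
    (hc : PLm p c) :
    CWbar p edist edist a c ≤ CWbar p edist edist a b + CWbar p edist edist b c := by
  refine le_of_forall_eps 2 fun ε hε hε' => ?_
  by_cases h1 : CWbar p edist edist a b = ∞
  · rw [h1]; simp
  by_cases h2 : CWbar p edist edist b c = ∞
  · rw [h2]; simp
  obtain ⟨γ, hγ, g, hg, hγg, l1⟩ := CW_lt_iff (ENNReal.lt_add_right h1 hε.ne')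
  obtain ⟨θ, hθ, h, hh, hθh, l2⟩ := CW_lt_iff (ENNReal.lt_add_right h2 hε.ne')
  refine (CW_tri_aux hp ha hb hc hγ hθ hg hh hγg hθh).trans ((add_le_add l1.le l2.le).trans ?_)
  refine le_of_eq ?_
  push_cast; ring

theorem measOn_lift (hp : 1 ≤ p) :
    MeasOn {z : A × Measure B | z.2 ∈ Pp p} (liftDist p edist edist) := by
  obtain ⟨d, hd, h⟩ := measOn_W (B := B) hp
  refine ⟨fun w => (edist w.1.1 w.2.1 ^ p + d (w.1.2, w.2.2) ^ p) ^ (1 / p), ?_, ?_⟩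
  · have : Measurable (fun w : (A × Measure B) × (A × Measure B) => d (w.1.2, w.2.2)) :=
      hd.comp (by fun_prop)
    fun_prop
  · intro x hx y hy
    simp only [liftDist]
    rw [← h _ hx _ hy]

theorem AW_triangle (hp : 1 ≤ p) {a b c : Measure (A × Measure B)} (ha : PLm p a) (hb : PLm p b)
    (hc : PLm p c) :
    AWbar p edist edist a c ≤ AWbar p edist edist a b + AWbar p edist edist b c := by
  have := ha.1
  have := hb.1
  have := hc.1
  refine Wp_triangle_gen hp _ {z : A × Measure B | z.2 ∈ Pp p} (PL_ae ha) (PL_ae hb) (PL_ae hc)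
    (measOn_lift hp) ?_ ?_
  · intro x hx y hy z hz
    have := Pp_prob hx
    have := Pp_prob hy
    have := Pp_prob hz
    refine le_trans ?_ (pair_add_le hp _ _ _ _)
    unfold liftDist
    gcongr
    · exact edist_triangle _ _ _
    · exact W_triangle hp _ _ _
  · intro ε hε hε'
    obtain ⟨j, C, hj, h1, h2, h3, h4, h5, h6⟩ := exists_zcell A B hp (ENNReal.half_pos hε.ne')
      (ENNReal.div_ne_top hε' (by simp))
    refine ⟨j, hj, fun x hx y hy he => ?_⟩
    calc liftDist p edist edist x y ≤ ((ε / 2) ^ p + (ε / 2) ^ p) ^ (1 / p) := by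
          unfold liftDist
          gcongr
          · exact h1 _ _ he
          · exact h4 _ _ (h2 x hx) _ (he ▸ h2 y hy)
      _ ≤ ((ε / 2 + ε / 2) ^ p) ^ (1 / p) := by
          gcongr
          exact ENNReal.add_rpow_le_rpow_add _ _ hp
      _ = ε := by rw [rpow_inv_p hp, ENNReal.add_halves]

theorem AW_comm (a b : Measure (A × Measure B)) :
    AWbar p edist edist a b = AWbar p edist edist b a := by
  have : ∀ x y : A × Measure B, liftDist p edist edist x y = liftDist p edist edist y x := by
    intro x y
    unfold liftDist
    rw [edist_comm]
    change (_ + W p x.2 y.2 ^ p) ^ _ = _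
    rw [W_comm]
  exact le_antisymm (Wp_symm p this _ _) (Wp_symm p this _ _)

theorem AW_self (hp : 1 ≤ p) {a : Measure (A × Measure B)} (ha : PLm p a) :
    AWbar p edist edist a a = 0 := by
  refine Wp_self hp (.of_forall fun x => ?_) ?_
  · unfold liftDist
    change (_ + W p x.2 x.2 ^ p) ^ _ = _
    rw [W_self hp, edist_self, ENNReal.zero_rpow_of_pos (by linarith), add_zero,
      ENNReal.zero_rpow_of_pos (by positivity)]
  · have hm : Measurable (fun x : A × Measure B => (x, x)) := by fun_prop
    have hP : MeasurableSet {z : A × Measure B | z.2 ∈ Pp p} := measurable_snd (measurableSet_Pp hp)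
    have h1 : ∀ᵐ z ∂(a.map (fun x => (x, x))), z.1.2 ∈ Pp p := by
      refine (ae_map_iff hm.aemeasurable (p := fun z => z.1.2 ∈ Pp p) (measurable_fst hP)).2 (PL_ae ha)
    have h2 : ∀ᵐ z ∂(a.map (fun x => (x, x))), z.2.2 ∈ Pp p := by
      refine (ae_map_iff hm.aemeasurable (p := fun z => z.2.2 ∈ Pp p) (measurable_snd hP)).2 (PL_ae ha)
    exact (measOn_lift hp).aemeasurable measurable_fst.aemeasurable measurable_snd.aemeasurable h1 h2

end LiftB


section Core
variable {A : Type*} [MetricSpace A] [SecondCountableTopology A] [MeasurableSpace A]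
  [BorelSpace A] [Nonempty A]
  {B : Type*} [MetricSpace B] [SecondCountableTopology B] [MeasurableSpace B]
  [BorelSpace B] [Nonempty B] {p : ℝ} {Ω : Type*} [MeasurableSpace Ω]

theorem lintegral_le_Lp {q : ℝ} (hq : 1 ≤ q) {P : Measure Ω} [IsProbabilityMeasure P] {f : Ω → ℝ≥0∞}
    (hf : AEMeasurable f P) : ∫⁻ ω, f ω ∂P ≤ (∫⁻ ω, f ω ^ q ∂P) ^ (1 / q) := by
  have := eLpNorm'_le_eLpNorm'_of_exponent_le (p := 1) (q := q) one_pos hq P hf.aestronglyMeasurable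
  simpa [eLpNorm'] using this

theorem F_lip (hp : 1 ≤ p) {f : B → NNReal} {K : NNReal} (hf : LipschitzWith K f) (m n : Measure B)
    [IsProbabilityMeasure m] [IsProbabilityMeasure n] :
    ∫⁻ x, (f x : ℝ≥0∞) ∂m ≤ ∫⁻ x, (f x : ℝ≥0∞) ∂n + K * W p m n := by
  have hfm : Measurable (fun x => (f x : ℝ≥0∞)) := hf.continuous.measurable.coe_nnreal_ennreal
  refine le_of_forall_eps (⌈K⌉₊) fun ε hε hε' => ?_
  obtain ⟨γ, hγ, hle⟩ := exists_near_cpl hp m n hε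
  have := Cpl_prob hγ
  have h1 : ∀ x y, (f x : ℝ≥0∞) ≤ f y + K * edist x y := by
    intro x y
    have h2 := hf x y
    have h3 : (f x : ℝ≥0∞) ≤ f y + edist (f x) (f y) := by
      rw [edist_nndist, ← ENNReal.coe_add, ENNReal.coe_le_coe, NNReal.nndist_eq]
      calc f x ≤ f y + (f x - f y) := le_add_tsub
        _ ≤ _ := by gcongr; exact le_max_left _ _
    exact h3.trans (by gcongr)
  calc ∫⁻ x, (f x : ℝ≥0∞) ∂m = ∫⁻ z, (f z.1 : ℝ≥0∞) ∂γ := by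
        rw [← hγ.1, lintegral_map hfm measurable_fst]
    _ ≤ ∫⁻ z, ((f z.2 : ℝ≥0∞) + K * edist z.1 z.2) ∂γ := lintegral_mono fun z => h1 _ _
    _ = ∫⁻ x, (f x : ℝ≥0∞) ∂n + K * ∫⁻ z, edist z.1 z.2 ∂γ := by
        have h2 : Measurable (fun z : B × B => (f z.2 : ℝ≥0∞)) := hfm.comp measurable_snd
        rw [lintegral_add_left h2, lintegral_const_mul _ (by fun_prop)]
        congr 1
        rw [← hγ.2, lintegral_map hfm measurable_snd]
    _ ≤ ∫⁻ x, (f x : ℝ≥0∞) ∂n + K * (W p m n + ε) := by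
        gcongr
        exact (lintegral_le_Lp hp (by fun_prop)).trans hle
    _ ≤ _ := by
        rw [mul_add, ← add_assoc]
        gcongr
        exact_mod_cast Nat.le_ceil K

theorem sq_sub_le (a b : ℝ≥0∞) : 2 * (b * a) + (a - b) ^ 2 ≤ a ^ 2 + b ^ 2 := by
  rcases le_total a b with h | h
  · rw [tsub_eq_zero_of_le h]
    obtain ⟨c, rfl⟩ := exists_add_of_le h
    calc 2 * ((a + c) * a) + 0 ^ 2 ≤ 2 * ((a + c) * a) + c ^ 2 := by gcongr; simp
      _ = _ := by ring
  · obtain ⟨c, rfl⟩ := exists_add_of_le h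
    by_cases hb : b = ∞
    · subst hb; simp
    rw [ENNReal.add_sub_cancel_left hb]
    exact le_of_eq (by ring)

theorem orth {μ ν : Measure (A × Measure B)} [IsProbabilityMeasure μ]
    {γ : Measure ((A × Measure B) × (A × Measure B))} (hγ : γ ∈ Cpl μ ν) {g : A × Measure B → Measure B}
    (hg : Measurable g) (h : IsCondBar γ (fun z => g z.2)) {f : B → ℝ≥0∞} (hf : Measurable f)
    (hf1 : ∀ x, f x ≤ 1) :
    ∫⁻ z, (∫⁻ x, f x ∂z.1.2 - ∫⁻ x, f x ∂(g z.2)) ^ 2 ∂γ + ∫⁻ z, (∫⁻ x, f x ∂(g z.2)) ^ 2 ∂γ ≤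
      ∫⁻ z, (∫⁻ x, f x ∂z.2) ^ 2 ∂μ := by
  have := Cpl_prob hγ
  have mF : Measurable (fun m : Measure B => ∫⁻ x, f x ∂m) := Measure.measurable_lintegral hf
  have mX : Measurable (fun z : (A × Measure B) × (A × Measure B) => ∫⁻ x, f x ∂z.1.2) :=
    mF.comp (measurable_snd.comp measurable_fst)
  have mY : Measurable (fun z : (A × Measure B) × (A × Measure B) => ∫⁻ x, f x ∂(g z.2)) :=
    mF.comp (hg.comp measurable_snd)
  have e1 : ∫⁻ z, (∫⁻ x, f x ∂z.2) ^ 2 ∂μ = ∫⁻ z, (∫⁻ x, f x ∂z.1.2) ^ 2 ∂γ := by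
    rw [← hγ.1, lintegral_map (f := fun z : A × Measure B => (∫⁻ x, f x ∂z.2) ^ 2)
      ((mF.comp measurable_snd).pow_const 2) measurable_fst]
  have e2 := CB hg h (φ := fun z => ∫⁻ x, f x ∂(g z)) (mF.comp hg) hf
  have e3 : ∫⁻ z, (2 * ((∫⁻ x, f x ∂(g z.2)) * ∫⁻ x, f x ∂z.1.2) +
      (∫⁻ x, f x ∂z.1.2 - ∫⁻ x, f x ∂(g z.2)) ^ 2) ∂γ ≤
      ∫⁻ z, ((∫⁻ x, f x ∂z.1.2) ^ 2 + (∫⁻ x, f x ∂(g z.2)) ^ 2) ∂γ :=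
    lintegral_mono fun z => sq_sub_le _ _
  have mXY : Measurable (fun z : (A × Measure B) × (A × Measure B) =>
    (∫⁻ x, f x ∂(g z.2)) * ∫⁻ x, f x ∂z.1.2) := mY.mul mX
  rw [lintegral_add_left (mXY.const_mul 2), lintegral_add_left (mX.pow_const 2),
    lintegral_const_mul _ mXY, ← e2] at e3
  have hfin : ∫⁻ z, (∫⁻ x, f x ∂(g z.2)) ^ 2 ∂γ ≠ ∞ := by
    refine ne_top_of_le_ne_top (b := 1) (by simp) ?_
    calc _ ≤ ∫⁻ z, 1 ∂γ := by
          refine lintegral_mono fun z => ?_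
          have := h.2.1 z
          refine pow_le_one' ?_ 2
          calc _ ≤ ∫⁻ x, 1 ∂(g z.2) := lintegral_mono hf1
            _ = 1 := by simp
      _ = 1 := by simp
  simp only [← sq] at e3
  rw [e1]
  refine (ENNReal.add_le_add_iff_right hfin).1 (le_trans (le_of_eq ?_) e3)
  ring

theorem sq_bound (hp : 1 ≤ p) {μ ν : Measure (A × Measure B)} (hμ : PLm p μ) (hν : PLm p ν)
    {γ : Measure ((A × Measure B) × (A × Measure B))} (hγ : γ ∈ Cpl μ ν) {g : A × Measure B → Measure B}
    (hg : Measurable g) (h : IsCondBar γ (fun z => g z.2)) {f : B → NNReal} {K : NNReal}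
    (hf : LipschitzWith K f) (hf1 : ∀ x, f x ≤ 1) {δ : ℝ≥0∞}
    (hδ : nrm2 p γ (fun z => edist z.1.1 z.2.1) (fun z => W p (g z.2) z.2.2) ≤ δ) :
    ∫⁻ z, (∫⁻ x, (f x : ℝ≥0∞) ∂z.2) ^ 2 ∂ν ≤
      ∫⁻ z, (∫⁻ x, (f x : ℝ≥0∞) ∂(g z.2)) ^ 2 ∂γ + 2 * K * δ := by
  have := hμ.1
  have := Cpl_prob hγ
  have hfm : Measurable (fun x => (f x : ℝ≥0∞)) := hf.continuous.measurable.coe_nnreal_ennreal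
  have mF : Measurable (fun m : Measure B => ∫⁻ x, (f x : ℝ≥0∞) ∂m) := Measure.measurable_lintegral hfm
  have mY : Measurable (fun z : (A × Measure B) × (A × Measure B) => ∫⁻ x, (f x : ℝ≥0∞) ∂(g z.2)) :=
    mF.comp (hg.comp measurable_snd)
  have kg := CB_Pp hp hμ hγ hg h
  have kY := Cpl_ae_snd hγ (PL_ae hν)
  have mW : AEMeasurable (fun z => W p (g z.2) z.2.2) γ :=
    (measOn_W hp).aemeasurable (hg.comp measurable_snd).aemeasurable
      (measurable_snd.comp measurable_snd).aemeasurable kg kY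
  have hle1 : ∀ m : Measure B, IsProbabilityMeasure m → ∫⁻ x, (f x : ℝ≥0∞) ∂m ≤ 1 := fun m hm => by
    calc _ ≤ ∫⁻ x, 1 ∂m := lintegral_mono fun x => ENNReal.coe_le_one_iff.2 (hf1 x)
      _ = 1 := by simp
  have hb : ∀ a b c : ℝ≥0∞, a ≤ 1 → b ≤ 1 → a ≤ b + c → a ^ 2 ≤ b ^ 2 + 2 * c := by
    intro a b c ha hb hc
    calc a ^ 2 = a * a := sq a
      _ ≤ a * (b + c) := by gcongr
      _ = a * b + a * c := mul_add _ _ _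
      _ ≤ (b + c) * b + 1 * c := by gcongr
      _ = b ^ 2 + c * b + c := by ring
      _ ≤ b ^ 2 + c * 1 + c := by gcongr
      _ = _ := by ring
  have hW : ∫⁻ z, W p (g z.2) z.2.2 ∂γ ≤ δ := by
    refine (lintegral_le_Lp hp mW).trans (le_trans ?_ hδ)
    unfold nrm2
    gcongr
    exact le_add_self
  calc ∫⁻ z, (∫⁻ x, (f x : ℝ≥0∞) ∂z.2) ^ 2 ∂ν = ∫⁻ z, (∫⁻ x, (f x : ℝ≥0∞) ∂z.2.2) ^ 2 ∂γ := by
        rw [← hγ.2, lintegral_map (f := fun z : A × Measure B => (∫⁻ x, (f x : ℝ≥0∞) ∂z.2) ^ 2)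
          ((mF.comp measurable_snd).pow_const 2) measurable_snd]
    _ ≤ ∫⁻ z, ((∫⁻ x, (f x : ℝ≥0∞) ∂(g z.2)) ^ 2 + (2 * K) * W p (g z.2) z.2.2) ∂γ := by
        refine lintegral_mono_ae ?_
        filter_upwards [kg, kY] with z h1 h2
        have i1 := Pp_prob h1
        have i2 := Pp_prob h2
        have := F_lip hp hf z.2.2 (g z.2)
        rw [W_comm] at this
        rw [mul_assoc]
        exact hb _ _ _ (hle1 _ i2) (hle1 _ i1) this
    _ = ∫⁻ z, (∫⁻ x, (f x : ℝ≥0∞) ∂(g z.2)) ^ 2 ∂γ + 2 * K * ∫⁻ z, W p (g z.2) z.2.2 ∂γ := by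
        rw [lintegral_add_left (mY.pow_const 2), lintegral_const_mul'' _ mW]
    _ ≤ _ := by gcongr

/-- `L²` estimate -/
theorem var_le (hp : 1 ≤ p) {μ ν : Measure (A × Measure B)} (hμ : PLm p μ) (hν : PLm p ν)
    {γ : Measure ((A × Measure B) × (A × Measure B))} (hγ : γ ∈ Cpl μ ν) {g : A × Measure B → Measure B}
    (hg : Measurable g) (h : IsCondBar γ (fun z => g z.2))
    {γ' : Measure ((A × Measure B) × (A × Measure B))} (hγ' : γ' ∈ Cpl ν μ)
    {g' : A × Measure B → Measure B}
    (hg' : Measurable g') (h' : IsCondBar γ' (fun z => g' z.2)) {f : B → NNReal} {K : NNReal}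
    (hf : LipschitzWith K f) (hf1 : ∀ x, f x ≤ 1) {δ : ℝ≥0∞}
    (hδ : nrm2 p γ (fun z => edist z.1.1 z.2.1) (fun z => W p (g z.2) z.2.2) ≤ δ)
    (hδ' : nrm2 p γ' (fun z => edist z.1.1 z.2.1) (fun z => W p (g' z.2) z.2.2) ≤ δ) :
    ∫⁻ z, (∫⁻ x, (f x : ℝ≥0∞) ∂z.1.2 - ∫⁻ x, (f x : ℝ≥0∞) ∂(g z.2)) ∂γ ≤ (4 * K * δ) ^ (1 / 2 : ℝ) := by
  have := hμ.1
  have := hν.1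
  have := Cpl_prob hγ
  have hfm : Measurable (fun x => (f x : ℝ≥0∞)) := hf.continuous.measurable.coe_nnreal_ennreal
  have hf1' : ∀ x, (f x : ℝ≥0∞) ≤ 1 := fun x => ENNReal.coe_le_one_iff.2 (hf1 x)
  have mF : Measurable (fun m : Measure B => ∫⁻ x, (f x : ℝ≥0∞) ∂m) := Measure.measurable_lintegral hfm
  have o1 := orth hγ hg h hfm hf1'
  have o2 := orth hγ' hg' h' hfm hf1'
  have b1 := sq_bound hp hμ hν hγ hg h hf hf1 hδ
  have b2 := sq_bound hp hν hμ hγ' hg' h' hf hf1 hδ'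
  have hfin : ∫⁻ z, (∫⁻ x, (f x : ℝ≥0∞) ∂(g z.2)) ^ 2 ∂γ ≠ ∞ := by
    refine ne_top_of_le_ne_top (b := 1) (by simp) ?_
    calc _ ≤ ∫⁻ z, 1 ∂γ := by
          refine lintegral_mono fun z => ?_
          have := h.2.1 z
          refine pow_le_one' ?_ 2
          calc _ ≤ ∫⁻ x, 1 ∂(g z.2) := lintegral_mono hf1'
            _ = 1 := by simp
      _ = 1 := by simp
  have hS : ∫⁻ z, (∫⁻ x, (f x : ℝ≥0∞) ∂z.1.2 - ∫⁻ x, (f x : ℝ≥0∞) ∂(g z.2)) ^ 2 ∂γ ≤ 4 * K * δ := by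
    refine (ENNReal.add_le_add_iff_right hfin).1 (o1.trans (b2.trans ?_))
    calc _ ≤ _ := add_le_add_left (le_add_self.trans (o2.trans b1)) _
      _ = _ := by ring
  have hm : Measurable (fun z : (A × Measure B) × (A × Measure B) =>
      ∫⁻ x, (f x : ℝ≥0∞) ∂z.1.2 - ∫⁻ x, (f x : ℝ≥0∞) ∂(g z.2)) :=
    (mF.comp (measurable_snd.comp measurable_fst)).sub (mF.comp (hg.comp measurable_snd))
  refine (lintegral_le_Lp (q := 2) (by norm_num) hm.aemeasurable).trans ?_
  refine ENNReal.rpow_le_rpow ?_ (by norm_num)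
  simpa using hS

end Core


section Final
variable {A : Type*} [MetricSpace A] [SecondCountableTopology A] [MeasurableSpace A]
  [BorelSpace A] [Nonempty A]
  {B : Type*} [MetricSpace B] [SecondCountableTopology B] [MeasurableSpace B]
  [BorelSpace B] [Nonempty B] {p : ℝ}

/-- Approximation of indicator functions by Lipschitz functions. -/
theorem set_approx (I : Measure B) [IsFiniteMeasure I] {S : Set B} (hS : MeasurableSet S)
    {ε : ℝ≥0∞} (hε : 0 < ε) :
    ∃ (f : B → NNReal) (K : NNReal) (d : B → ℝ≥0∞), LipschitzWith K f ∧ (∀ x, f x ≤ 1) ∧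
      Measurable d ∧ (∀ x, S.indicator 1 x ≤ (f x : ℝ≥0∞) + d x) ∧
      (∀ x, (f x : ℝ≥0∞) ≤ S.indicator 1 x + d x) ∧ ∫⁻ x, d x ∂I ≤ 2 * ε := by
  obtain ⟨F, hFS, hF, hlt⟩ := hS.exists_isClosed_sdiff_lt (measure_ne_top I S) hε.ne'
  have hT := tendsto_lintegral_thickenedIndicator_of_isClosed I hF (δs := fun n : ℕ => 1 / ((n : ℝ) + 1))
    (fun n => by positivity) tendsto_one_div_add_atTop_nhds_zero_nat
  have hlt2 : I F < I F + ε := ENNReal.lt_add_right (measure_ne_top I F) hε.ne'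
  obtain ⟨n, hn⟩ := (hT.eventually (gt_mem_nhds hlt2)).exists
  have hpos : (0 : ℝ) < 1 / ((n : ℝ) + 1) := by positivity
  set f : B → NNReal := fun x => thickenedIndicator hpos F x with hf
  have hl : LipschitzWith (1 / ((n : ℝ) + 1)).toNNReal⁻¹ f := lipschitzWith_thickenedIndicator hpos F
  have hfm : Measurable (fun x => (f x : ℝ≥0∞)) := hl.continuous.measurable.coe_nnreal_ennreal
  have hm1 : Measurable ((S \ F).indicator (1 : B → ℝ≥0∞)) :=
    measurable_one.indicator (hS.diff hF.measurableSet)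
  have hm2 : Measurable (F.indicator (1 : B → ℝ≥0∞)) := measurable_one.indicator hF.measurableSet
  have hFf : ∀ x, F.indicator (1 : B → ℝ≥0∞) x ≤ f x := by
    intro x
    by_cases hx : x ∈ F
    · have : f x = 1 := thickenedIndicator_one hpos F hx
      simp [hx, this]
    · simp [hx]
  refine ⟨f, _, fun x => (S \ F).indicator (1 : B → ℝ≥0∞) x + ((f x : ℝ≥0∞) - F.indicator (1 : B → ℝ≥0∞) x), hl,
    fun x => thickenedIndicator_le_one hpos F x, hm1.add (hfm.sub hm2), ?_, ?_, ?_⟩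
  · intro x
    by_cases hx : x ∈ F
    · have : f x = 1 := thickenedIndicator_one hpos F hx
      simp [hFS hx, this]
    · by_cases hxS : x ∈ S
      · have : x ∈ S \ F := ⟨hxS, hx⟩
        simp only [Set.indicator_of_mem hxS, Set.indicator_of_mem this, Pi.one_apply]
        exact le_add_left le_self_add
      · simp [hxS]
  · intro x
    have h1 : F.indicator (1 : B → ℝ≥0∞) x ≤ S.indicator 1 x :=
      Set.indicator_le_indicator_of_subset hFS (fun _ => zero_le) x
    calc (f x : ℝ≥0∞) ≤ F.indicator (1 : B → ℝ≥0∞) x + ((f x : ℝ≥0∞) - F.indicator (1 : B → ℝ≥0∞) x) :=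
          le_add_tsub
      _ ≤ _ := by gcongr; exact le_add_self
  · rw [lintegral_add_left hm1, lintegral_indicator_one (hS.diff hF.measurableSet), two_mul]
    gcongr
    rw [lintegral_sub hm2 _ (ae_of_all _ hFf)]
    · rw [lintegral_indicator_one hF.measurableSet, tsub_le_iff_left]
      exact hn.le
    · rw [lintegral_indicator_one hF.measurableSet]
      exact measure_ne_top _ _

theorem int_I {μ ν : Measure (A × Measure B)}
    {γ : Measure ((A × Measure B) × (A × Measure B))} (hγ : γ ∈ Cpl μ ν) {f : B → ℝ≥0∞} (hf : Measurable f) :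
    ∫⁻ z, ∫⁻ x, f x ∂z.1.2 ∂γ = ∫⁻ x, f x ∂(μ.bind (fun z => z.2)) := by
  rw [lintegral_bind' measurable_snd hf, ← hγ.1,
    lintegral_map (f := fun z : A × Measure B => ∫⁻ x, f x ∂z.2)
      ((Measure.measurable_lintegral hf).comp measurable_snd) measurable_fst]

theorem cell_bound {μ ν : Measure (A × Measure B)}
    {γ : Measure ((A × Measure B) × (A × Measure B))} (hγ : γ ∈ Cpl μ ν) {g : A × Measure B → Measure B}
    (hg : Measurable g) (h : IsCondBar γ (fun z => g z.2)) {f d : B → ℝ≥0∞} (hf : Measurable f)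
    (hd : Measurable d) {S : Set B} (hS : MeasurableSet S) (h1 : ∀ x, S.indicator 1 x ≤ f x + d x)
    (h2 : ∀ x, f x ≤ S.indicator 1 x + d x) {a b : ℝ≥0∞}
    (ha : ∫⁻ z, (∫⁻ x, f x ∂z.1.2 - ∫⁻ x, f x ∂(g z.2)) ∂γ ≤ a)
    (hb : ∫⁻ x, d x ∂(μ.bind (fun z => z.2)) ≤ b) :
    ∫⁻ z, (z.1.2 S - g z.2 S) ∂γ ≤ a + (b + b) := by
  have mF : Measurable (fun m : Measure B => ∫⁻ x, d x ∂m) := Measure.measurable_lintegral hd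
  have mX : Measurable (fun z : (A × Measure B) × (A × Measure B) => ∫⁻ x, d x ∂z.1.2) :=
    mF.comp (measurable_snd.comp measurable_fst)
  have mY : Measurable (fun z : (A × Measure B) × (A × Measure B) => ∫⁻ x, d x ∂(g z.2)) :=
    mF.comp (hg.comp measurable_snd)
  have key : ∀ m n : Measure B, m S - n S ≤
      (∫⁻ x, f x ∂m - ∫⁻ x, f x ∂n) + (∫⁻ x, d x ∂m + ∫⁻ x, d x ∂n) := by
    intro m n
    rw [tsub_le_iff_right]
    have k1 : m S ≤ ∫⁻ x, f x ∂m + ∫⁻ x, d x ∂m := by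
      rw [← lintegral_add_left hf, ← lintegral_indicator_one hS]
      exact lintegral_mono h1
    have k2 : ∫⁻ x, f x ∂n ≤ n S + ∫⁻ x, d x ∂n := by
      rw [← lintegral_indicator_one (μ := n) hS, ← lintegral_add_right _ hd]
      exact lintegral_mono h2
    calc m S ≤ ∫⁻ x, f x ∂m + ∫⁻ x, d x ∂m := k1
      _ ≤ ((∫⁻ x, f x ∂m - ∫⁻ x, f x ∂n) + ∫⁻ x, f x ∂n) + ∫⁻ x, d x ∂m := by
          gcongr; exact le_tsub_add
      _ ≤ ((∫⁻ x, f x ∂m - ∫⁻ x, f x ∂n) + (n S + ∫⁻ x, d x ∂n)) + ∫⁻ x, d x ∂m := by gcongr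
      _ = _ := by ring
  calc _ ≤ ∫⁻ z, ((∫⁻ x, f x ∂z.1.2 - ∫⁻ x, f x ∂(g z.2)) +
        (∫⁻ x, d x ∂z.1.2 + ∫⁻ x, d x ∂(g z.2))) ∂γ := lintegral_mono fun z => key _ _
    _ = ∫⁻ z, (∫⁻ x, f x ∂z.1.2 - ∫⁻ x, f x ∂(g z.2)) ∂γ +
        (∫⁻ z, ∫⁻ x, d x ∂z.1.2 ∂γ + ∫⁻ z, ∫⁻ x, d x ∂(g z.2) ∂γ) := by
        have mXY : Measurable (fun z : (A × Measure B) × (A × Measure B) =>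
          ∫⁻ x, d x ∂z.1.2 + ∫⁻ x, d x ∂(g z.2)) := mX.add mY
        rw [lintegral_add_right _ mXY, lintegral_add_left mX]
    _ ≤ _ := by
        rw [CB1 hg h hd, int_I hγ hd]
        gcongr

theorem nrmW_le (hp : 1 ≤ p) {μ ν : Measure (A × Measure B)} (hμ : PLm p μ)
    {γ : Measure ((A × Measure B) × (A × Measure B))} (hγ : γ ∈ Cpl μ ν) {g : A × Measure B → Measure B}
    (hg : Measurable g) (h : IsCondBar γ (fun z => g z.2)) {t : B → ℕ} (ht : Measurable t) {N : ℕ}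
    (htN : ∀ x, t x ≤ N) (y : ℕ → B) (D : ℝ≥0∞) (hD : ∀ k ≤ N, ∀ l ≤ N, edist (y k) (y l) ≤ D) :
    nrm2 p γ (fun _ => 0) (fun z => W p z.1.2 (g z.2)) ≤
      (∫⁻ x, edist x (y (t x)) ^ p ∂(μ.bind (fun z => z.2))) ^ (1 / p) +
      ((∫⁻ x, edist x (y (t x)) ^ p ∂(μ.bind (fun z => z.2))) ^ (1 / p) +
      (D ^ p * ∑ k ∈ Finset.range (N + 1), ∫⁻ z, (z.1.2 (t ⁻¹' {k}) - g z.2 (t ⁻¹' {k})) ∂γ) ^ (1 / p)) := by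
  have hy : Measurable (fun x => edist x (y (t x)) ^ p) :=
    (measurable_id.edist ((measurable_from_nat (f := y)).comp ht)).pow_const p
  have mF : Measurable (fun m : Measure B => ∫⁻ x, edist x (y (t x)) ^ p ∂m) :=
    Measure.measurable_lintegral hy
  have mX : Measurable (fun z : (A × Measure B) × (A × Measure B) => ∫⁻ x, edist x (y (t x)) ^ p ∂z.1.2) :=
    mF.comp (measurable_snd.comp measurable_fst)
  have mY : Measurable (fun z : (A × Measure B) × (A × Measure B) => ∫⁻ x, edist x (y (t x)) ^ p ∂(g z.2)) :=
    mF.comp (hg.comp measurable_snd)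
  have mk : ∀ k, Measurable (fun z : (A × Measure B) × (A × Measure B) =>
      (z.1.2 (t ⁻¹' {k}) - g z.2 (t ⁻¹' {k}))) := fun k =>
    ((Measure.measurable_coe (ht (measurableSet_singleton k))).comp
      (measurable_snd.comp measurable_fst)).sub
      ((Measure.measurable_coe (ht (measurableSet_singleton k))).comp (hg.comp measurable_snd))
  have mS : Measurable (fun z : (A × Measure B) × (A × Measure B) =>
      ∑ k ∈ Finset.range (N + 1), (z.1.2 (t ⁻¹' {k}) - g z.2 (t ⁻¹' {k}))) :=
    Finset.measurable_sum _ fun k _ => mk k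
  have kX := Cpl_ae_fst hγ (PL_ae hμ)
  have kg := CB_Pp hp hμ hγ hg h
  have step : nrm2 p γ (fun _ => 0) (fun z => W p z.1.2 (g z.2)) ≤
      nrm2 p γ (fun _ => 0 + (0 + 0)) (fun z => (∫⁻ x, edist x (y (t x)) ^ p ∂z.1.2) ^ (1 / p) +
        ((∫⁻ x, edist x (y (t x)) ^ p ∂(g z.2)) ^ (1 / p) +
        (D ^ p * ∑ k ∈ Finset.range (N + 1), (z.1.2 (t ⁻¹' {k}) - g z.2 (t ⁻¹' {k}))) ^ (1 / p))) := by
    refine nrm2_mono hp (by simp) ?_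
    filter_upwards [kX, kg] with z h1 h2
    have i1 := Pp_prob h1
    have i2 := Pp_prob h2
    exact W_le_disc hp z.1.2 (g z.2) ht htN y D hD
  have a1 := (mX.pow_const (1 / p)).aemeasurable (μ := γ)
  have a2 := (mY.pow_const (1 / p)).aemeasurable (μ := γ)
  have a3 := ((mS.const_mul (D ^ p)).pow_const (1 / p)).aemeasurable (μ := γ)
  have z0 : AEMeasurable (fun _ : (A × Measure B) × (A × Measure B) => (0 : ℝ≥0∞)) γ := aemeasurable_const
  refine step.trans ((nrm2_add_le hp (z0) a1 (z0.add z0) (a2.add a3)).trans ?_)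
  refine add_le_add ?_ ((nrm2_add_le hp z0 a2 z0 a3).trans (add_le_add ?_ ?_))
  · rw [nrm2_zero_left hp]
    simp only [rpow_p_inv hp]
    rw [int_I hγ hy]
  · rw [nrm2_zero_left hp]
    simp only [rpow_p_inv hp]
    rw [CB1 hg h hy, int_I hγ hy]
  · rw [nrm2_zero_left hp]
    simp only [rpow_p_inv hp]
    rw [lintegral_const_mul _ mS, lintegral_finsetSum _ fun k _ => mk k]

theorem core (hp : 1 ≤ p) {μ : Measure (A × Measure B)} (hμ : PLm p μ) {ε : ℝ≥0∞} (hε : 0 < ε)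
    (hε' : ε ≠ ∞) : ∃ δ : ℝ≥0∞, 0 < δ ∧ ∀ ν : Measure (A × Measure B), PLm p ν →
      CWbar p edist edist μ ν < δ → CWbar p edist edist ν μ < δ → AWbar p edist edist μ ν < ε := by
  have hp0 : 0 < p := by linarith
  have := hμ.1
  set I : Measure B := μ.bind (fun z => z.2) with hI
  have hIP : I ∈ Pp p := bind_mem_Pp hp measurable_snd (PL_ae hμ) (PL_mom hp hμ)
  have := Pp_prob hIP
  have hε0 : 0 < ε / 16 := ENNReal.div_pos hε.ne' (by simp)
  have hε0' : ε / 16 ≠ ∞ := ENNReal.div_ne_top hε' (by simp)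
  obtain ⟨t₀, ht₀, htc⟩ := exists_bcell (B := B) (ε / 16) hε0
  obtain ⟨N, hN⟩ := exists_trunc hp hε0 hε0' ht₀ htc hIP
  set t := trunc t₀ N with ht_def
  have ht : Measurable t := measurable_trunc ht₀ N
  set y := TopologicalSpace.denseSeq B with hy
  set D : ℝ≥0∞ := ∑ k ∈ Finset.range (N + 1), ∑ l ∈ Finset.range (N + 1), edist (y k) (y l) with hD
  have hDfin : D ≠ ∞ := by
    simp only [hD, ne_eq, ENNReal.sum_eq_top, not_exists, not_and]
    intro k _ l _
    exact edist_ne_top _ _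
  have hDb : ∀ k ≤ N, ∀ l ≤ N, edist (y k) (y l) ≤ D := by
    intro k hk l hl
    calc edist (y k) (y l) ≤ ∑ l ∈ Finset.range (N + 1), edist (y k) (y l) :=
          Finset.single_le_sum (f := fun l => edist (y k) (y l)) (fun _ _ => zero_le)
            (Finset.mem_range.2 (by omega))
      _ ≤ D := Finset.single_le_sum (f := fun k => ∑ l ∈ Finset.range (N + 1), edist (y k) (y l))
          (fun _ _ => zero_le) (Finset.mem_range.2 (by omega))
  have hq0 : 0 < ε / 4 := ENNReal.div_pos hε.ne' (by simp)
  have hq0' : ε / 4 ≠ ∞ := ENNReal.div_ne_top hε' (by simp)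
  have hq1 : (ε / 4) ^ p ≠ 0 := (ENNReal.rpow_pos hq0 hq0').ne'
  have hc : D ^ p * ((N + 1 : ℕ) : ℝ≥0∞) ≠ ∞ :=
    ENNReal.mul_ne_top (ENNReal.rpow_ne_top_of_nonneg hp0.le hDfin) (by simp)
  obtain ⟨η, hη, hηle⟩ := ENNReal.exists_nnreal_pos_mul_lt hc hq1
  have hη' : (0 : ℝ≥0∞) < η := by exact_mod_cast hη
  have hη8 : (0 : ℝ≥0∞) < η / 8 := ENNReal.div_pos hη'.ne' (by simp)
  choose f K d hf hf1 hd h1 h2 hdI using fun k : ℕ =>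
    set_approx I (ht (measurableSet_singleton k)) hη8
  set Ks : NNReal := ∑ k ∈ Finset.range (N + 1), K k with hKs
  have hη2 : ((η : ℝ≥0∞) / 2) ^ 2 ≠ 0 :=
    pow_ne_zero _ (ENNReal.div_pos hη'.ne' (by simp)).ne'
  obtain ⟨n, hn, hnle⟩ := ENNReal.exists_nnreal_pos_mul_lt (a := 4 * (Ks : ℝ≥0∞))
    (ENNReal.mul_ne_top (by simp) (by simp)) hη2
  have hn' : (0 : ℝ≥0∞) < n := by exact_mod_cast hn
  refine ⟨min (ε / 4) n, lt_min hq0 hn', fun ν hν hc1 hc2 => ?_⟩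
  obtain ⟨γ, hγ, g, hg, hb, hlt⟩ := CW_lt_iff hc1
  obtain ⟨γ', hγ', g', hg', hb', hlt'⟩ := CW_lt_iff hc2
  have hcell : ∀ k ∈ Finset.range (N + 1), ∫⁻ z, (z.1.2 (t ⁻¹' {k}) - g z.2 (t ⁻¹' {k})) ∂γ ≤ η := by
    intro k hk
    have hv := var_le hp hμ hν hγ hg hb hγ' hg' hb' (hf k) (hf1 k) hlt.le hlt'.le
    have hcb := cell_bound hγ hg hb (f := fun x => (f k x : ℝ≥0∞))
      (hf k).continuous.measurable.coe_nnreal_ennreal (hd k)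
      (ht (measurableSet_singleton k)) (h1 k) (h2 k) hv (hdI k)
    refine hcb.trans ?_
    have hKk : (K k : ℝ≥0∞) ≤ Ks := by
      exact_mod_cast Finset.single_le_sum (f := K) (fun _ _ => zero_le) hk
    have e1 : (4 * (K k : ℝ≥0∞) * min (ε / 4) n) ^ (1 / 2 : ℝ) ≤ η / 2 := by
      calc (4 * (K k : ℝ≥0∞) * min (ε / 4) n) ^ (1 / 2 : ℝ)
          ≤ (((η : ℝ≥0∞) / 2) ^ 2) ^ (1 / 2 : ℝ) := by
            refine ENNReal.rpow_le_rpow ?_ (by norm_num)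
            refine le_trans ?_ hnle.le
            rw [mul_comm]
            gcongr
            exact min_le_right _ _
        _ = η / 2 := by
            rw [← ENNReal.rpow_natCast, ← ENNReal.rpow_mul]; norm_num
    calc _ ≤ (η : ℝ≥0∞) / 2 + (2 * (η / 8) + 2 * (η / 8)) := by gcongr
      _ = η := by
        have : (2 * ((η : ℝ≥0∞) / 8) + 2 * (η / 8)) = η / 2 := by
          rw [show (2 * ((η : ℝ≥0∞) / 8) + 2 * (η / 8)) = 4 * (η / 8) by ring, div_eq_mul_inv,
            div_eq_mul_inv, show (8 : ℝ≥0∞) = 4 * 2 by norm_num,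
            ENNReal.mul_inv (by simp) (by simp), ← mul_assoc, mul_comm 4, mul_assoc, ← mul_assoc 4,
            ENNReal.mul_inv_cancel (by simp) (by simp), one_mul]
        rw [this, ENNReal.add_halves]
  have hW := nrmW_le hp hμ hγ hg hb ht (fun x => trunc_le t₀ N x) y D hDb
  have hp1 : (0 : ℝ) ≤ 1 / p := by positivity
  have b1 : (∫⁻ x, edist x (y (t x)) ^ p ∂I) ^ (1 / p) ≤ 2 * (ε / 16) := by
    rw [← rpow_inv_p hp (2 * (ε / 16))]
    refine ENNReal.rpow_le_rpow (hN.trans ?_) hp1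
    rw [ENNReal.mul_rpow_of_nonneg _ _ hp0.le]
    gcongr
    calc (2 : ℝ≥0∞) = 2 ^ (1 : ℝ) := by simp
      _ ≤ 2 ^ p := ENNReal.rpow_le_rpow_of_exponent_le (by norm_num) hp
  have b2 : (D ^ p * ∑ k ∈ Finset.range (N + 1),
      ∫⁻ z, (z.1.2 (t ⁻¹' {k}) - g z.2 (t ⁻¹' {k})) ∂γ) ^ (1 / p) ≤ ε / 4 := by
    rw [← rpow_inv_p hp (ε / 4)]
    refine ENNReal.rpow_le_rpow (le_trans ?_ hηle.le) hp1
    calc _ ≤ D ^ p * ∑ k ∈ Finset.range (N + 1), (η : ℝ≥0∞) := by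
          gcongr with k hk
          exact hcell k hk
      _ = _ := by simp; ring
  have q4 : 2 * (ε / 16) + 2 * (ε / 16) = ε / 4 := by
    rw [show 2 * (ε / 16) + 2 * (ε / 16) = 4 * (ε / 16) by ring, div_eq_mul_inv,
            div_eq_mul_inv, show (16 : ℝ≥0∞) = 4 * 4 by norm_num,
            ENNReal.mul_inv (by simp) (by simp), ← mul_assoc, mul_comm 4, mul_assoc, ← mul_assoc 4,
            ENNReal.mul_inv_cancel (by simp) (by simp), one_mul]
  have hW2 : nrm2 p γ (fun _ => 0) (fun z => W p z.1.2 (g z.2)) ≤ ε / 4 + ε / 4 := by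
    refine hW.trans ?_
    rw [← add_assoc]
    refine add_le_add ?_ b2
    rw [← q4]
    exact add_le_add b1 b1
  have kX := Cpl_ae_fst hγ (PL_ae hμ)
  have kg := CB_Pp hp hμ hγ hg hb
  have kY := Cpl_ae_snd hγ (PL_ae hν)
  have mg : AEMeasurable (fun z : (A × Measure B) × (A × Measure B) => g z.2) γ :=
    (hg.comp measurable_snd).aemeasurable
  have mW1 : AEMeasurable (fun z => W p (g z.2) z.2.2) γ :=
    (measOn_W hp).aemeasurable mg (measurable_snd.comp measurable_snd).aemeasurable kg kY
  have mW2 : AEMeasurable (fun z => W p z.1.2 (g z.2)) γ :=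
    (measOn_W hp).aemeasurable (measurable_snd.comp measurable_fst).aemeasurable mg kX kg
  have mE : AEMeasurable (fun z : (A × Measure B) × (A × Measure B) => edist z.1.1 z.2.1) γ :=
    ((measurable_fst.comp measurable_fst).edist (measurable_fst.comp measurable_snd)).aemeasurable
  calc AWbar p edist edist μ ν ≤ nrm2 p γ (fun z => edist z.1.1 z.2.1) (fun z => W p z.1.2 z.2.2) := by
        refine (Wp_le p _ hγ).trans (le_of_eq ?_)
        simp only [lift_rpow hp]
        rfl
    _ ≤ nrm2 p γ (fun z => edist z.1.1 z.2.1 + 0) (fun z => W p (g z.2) z.2.2 + W p z.1.2 (g z.2)) := by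
        refine nrm2_mono hp (by simp) ?_
        filter_upwards [kX, kg, kY] with z i1 i2 i3
        have i1 := Pp_prob i1
        have i2 := Pp_prob i2
        have i3 := Pp_prob i3
        rw [add_comm]
        exact W_triangle hp _ _ _
    _ ≤ _ := nrm2_add_le hp mE mW1 aemeasurable_const mW2
    _ ≤ nrm2 p γ (fun z => edist z.1.1 z.2.1) (fun z => W p (g z.2) z.2.2) + (ε / 4 + ε / 4) := by gcongr
    _ < ε / 4 + (ε / 4 + ε / 4) :=
        ENNReal.add_lt_add_right (ENNReal.add_ne_top.2 ⟨hq0', hq0'⟩) (hlt.trans_le (min_le_left _ _))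
    _ ≤ ε / 4 + (ε / 4 + ε / 4) + ε / 4 := le_self_add
    _ = ε := by
        rw [show ε / 4 + (ε / 4 + ε / 4) + ε / 4 = 4 * (ε / 4) by ring]
        exact ENNReal.mul_div_cancel (by simp) (by simp)

theorem ballTop_le {α : Type*} {d e : α → α → ℝ≥0∞} (hee : ∀ x, e x x = 0)
    (h : ∀ x y r, d x y < r → ∃ δ > 0, ∀ z, e y z < δ → d x z < r) : ballTop e ≤ ballTop d := by
  unfold ballTop
  refine le_generateFrom ?_
  rintro s ⟨x, r, hr, rfl⟩
  refine (@isOpen_iff_forall_mem_open _ (TopologicalSpace.generateFrom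
    {s | ∃ x ε, 0 < ε ∧ s = {y | e x y < ε}}) _).2 fun y hy => ?_
  obtain ⟨δ, hδ, hz⟩ := h x y r hy
  exact ⟨{z | e y z < δ}, fun z h => hz z h, TopologicalSpace.isOpen_generateFrom_of_mem ⟨y, δ, hδ, rfl⟩,
    by simpa [hee] using hδ⟩

theorem exists_gap {a r : ℝ≥0∞} (h : a < r) : ∃ δ : ℝ≥0∞, 0 < δ ∧ δ ≠ ∞ ∧ ∀ b, b < δ → a + b < r := by
  refine ⟨min (r - a) 1, lt_min (tsub_pos_of_lt h) one_pos, by simp, fun b hb => ?_⟩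
  have := hb.trans_le (min_le_left _ _)
  rw [add_comm]
  exact lt_tsub_iff_right.1 this

end Final

/-- **Theorem 4.16.**  The topology induced by `SCW̄_p` on `𝒫_p(𝒳₁ × 𝒫_p(𝒳₂))`
equals the topology induced by `AW̄_p`. -/
theorem SCWbar_AWbar_same_topology
    {X1 X2 : Type} [MetricSpace X1] [CompleteSpace X1] [SecondCountableTopology X1]
    [MeasurableSpace X1] [BorelSpace X1] [Nonempty X1]
    [MetricSpace X2] [CompleteSpace X2] [SecondCountableTopology X2]
    [MeasurableSpace X2] [BorelSpace X2] [Nonempty X2]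
    (p : ℝ) (hp : 1 ≤ p) :
    let dA : X1 → X1 → ℝ≥0∞ := edist
    let dB : X2 → X2 → ℝ≥0∞ := edist
    let PL := {μ : Measure (X1 × Measure X2) // MemPpLift p dA dB μ}
    ballTop (fun μ ν : PL => SCWbar p dA dB μ.1 ν.1) =
      ballTop (fun μ ν : PL => AWbar p dA dB μ.1 ν.1) := by
  intro dA dB PL
  refine le_antisymm (ballTop_le ?_ ?_) (ballTop_le ?_ ?_)
  · intro x
    have h := CW_le_AW hp x.2 x.2
    rw [AW_self hp x.2] at h
    have h0 : CWbar p dA dB x.1 x.1 = 0 := le_antisymm h zero_le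
    simp [SCWbar, h0]
  · intro x y r h
    obtain ⟨e, he, he', hb⟩ := exists_gap h
    obtain ⟨δ, hδ, hc⟩ := core hp y.2 he he'
    refine ⟨δ, hδ, fun z hz => ?_⟩
    have hz' := max_lt_iff.1 hz
    exact (AW_triangle hp x.2 y.2 z.2).trans_lt (hb _ (hc z.1 z.2 hz'.1 hz'.2))
  · intro x
    exact AW_self hp x.2
  · intro x y r h
    obtain ⟨e, he, he', hb⟩ := exists_gap h
    refine ⟨e, he, fun z hz => ?_⟩
    refine lt_of_le_of_lt ?_ (hb _ hz)
    refine max_le ?_ ?_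
    · exact (CW_triangle hp x.2 y.2 z.2).trans (add_le_add (le_max_left _ _) (CW_le_AW hp y.2 z.2))
    · refine (CW_triangle hp z.2 y.2 x.2).trans ?_
      rw [add_comm]
      refine add_le_add (le_max_right _ _) ?_
      refine (CW_le_AW hp z.2 y.2).trans ?_
      rw [AW_comm]


end AWPaper
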